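/- arXiv:2604.15138 — 2 statements merged into one kernel-verified Lean document; each statement's English description precedes it below -/
import Mathlib

section
/- Let d ≥ 1 and let G be a connected, simple graph in ℝ^d which is locally finite and such that every vector of ℤ^d is a period of G. Then there exist a positive integer N and a vertex-colouring edge labelling w of G with values in {1,2,3} which is invariant under translation by every vector of (2N)ℤ^d (i.e., w(u+t, v+t) = w(u,v) for all adjacent u, v and all t ∈ (2N)ℤ^d). -/
/-!
The labelling is lifted from a finite quotient. For `N` large, a nonzero vector of `Nℤ^d` never
moves a vertex by graph distance one or two (`exists_scale`), so the quotient by a finite index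
lattice `Λ ⊆ Nℤ^d` is a finite simple graph covered by `G`, and weighted degrees can be computed
there.

On a finite graph, suppose `P` is an independent set and some set of edges between `P` and its
complement `U` has odd degree at every vertex of `U` and even degree at every vertex of `P`. Then a
`{1, 2, 3}`-labelling can be constructed (`finite_core`) with even weighted degrees on `P` and odd
ones on `U`; inside `U`, a maximum cut separates its two sides modulo `4`, a greedy choice separates
adjacent vertices of one side, and an integral flow along the cut edges (`exists_flow`, whose
feasibility is the maximality of the cut) makes the chosen degrees attainable.

Such an edge set exists when `|U|` is even and the bipartite graph between `P` and `U` is connected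
(`exists_join`). A set `P` with connected bipartite graph arises by greedily growing an independent
seed; growing it in orbits of a free involution `t` of the quotient makes `|U|` even
(`exists_dominating`, `finite_labelling`).

The seed is every other vertex of the image of a periodic path, obtained by extending a shortest
path between two distinct vertices equivalent under `Nℤ^d` (`exists_line`). If `v` is the period
vector of this path, `Λ` is chosen to contain `4 • v` but not `v`, `2 • v`, `3 • v`
(`exists_sublattice`); adjacent vertices of the image then have indices of different parity, so
that the seed is independent, and `t` is the translation by `2 • v`.
-/

open scoped BigOperators

/-- The weighted degree of a vertex `u`: the sum of the weights of the edges incident to `u`. -/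
noncomputable def wdeg {d : ℕ} (Adj : (Fin d → ℝ) → (Fin d → ℝ) → Prop)
    (w : (Fin d → ℝ) → (Fin d → ℝ) → ℕ) (u : Fin d → ℝ) : ℕ :=
  ∑ᶠ v ∈ {v | Adj u v}, w u v

/-- `t` is a period of the graph with vertex set `V` and adjacency `Adj`:
translation by `t` maps `V` onto `V` and preserves adjacency. -/
def IsPeriod {d : ℕ} (V : Set (Fin d → ℝ)) (Adj : (Fin d → ℝ) → (Fin d → ℝ) → Prop)
    (t : Fin d → ℝ) : Prop :=
  ((fun v => v + t) '' V = V) ∧ (∀ u v, Adj u v ↔ Adj (u + t) (v + t))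

namespace ZD

open Finset

/-! ### Flows, greedy choices and maximum cuts -/

/-- Indicator that the pair `e` is separated by the vertex set `Z`. -/
def cross {W : Type*} [DecidableEq W] (Z : Finset W) (e : W × W) : ℤ :=
  if (e.1 ∈ Z ↔ e.2 ∈ Z) then 0 else 1

lemma cross_submod {W : Type*} [DecidableEq W] (Z Y : Finset W) (e : W × W) :
    cross (Z ∩ Y) e + cross (Z ∪ Y) e ≤ cross Z e + cross Y e := by
  unfold cross
  simp only [mem_inter, mem_union]
  by_cases h1 : e.1 ∈ Z <;> by_cases h2 : e.1 ∈ Y <;> by_cases h3 : e.2 ∈ Z <;>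
    by_cases h4 : e.2 ∈ Y <;> simp [h1, h2, h3, h4]

/-- Supply-demand theorem for unit capacities: if no vertex set demands more than the number of
edges of `B` leaving it, then an integral flow `f` along `B` with values in `{-1, 0, 1}` has
divergence `b`. The proof removes one edge at a time; the submodularity of the cut function shows
that one of the values `1`, `-1`, `0` on that edge leaves a feasible problem. -/
lemma exists_flow {W : Type*} [Fintype W] [DecidableEq W] (B : Finset (W × W)) :
    ∀ b : W → ℤ, ∑ v, b v = 0 → (∀ Z : Finset W, ∑ v ∈ Z, b v ≤ ∑ e ∈ B, cross Z e) →
      ∃ f : W × W → ℤ, (∀ e, -1 ≤ f e ∧ f e ≤ 1) ∧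
        ∀ v, b v = ∑ e ∈ B, f e * ((if e.1 = v then 1 else 0) - (if e.2 = v then 1 else 0)) := by
  induction B using Finset.induction_on with
  | empty =>
    intro b hb hZ
    have hle : ∀ v, b v ≤ 0 := fun v => by simpa using hZ {v}
    have := (Finset.sum_eq_zero_iff_of_nonpos (s := univ) (fun v _ => hle v)).1 hb
    exact ⟨fun _ => 0, by simp, fun v => by simpa using this v (mem_univ v)⟩
  | insert e B he ih =>
    intro b hb hZ
    obtain ⟨u, v⟩ := e
    -- `c` is the amount sent along the new edge; it must leave a feasible problem on `B`
    obtain ⟨c, hc1, hc2, hcu, hcv⟩ : ∃ c : ℤ, -1 ≤ c ∧ c ≤ 1 ∧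
        (∀ Z : Finset W, u ∈ Z → v ∉ Z → ∑ v ∈ Z, b v - c ≤ ∑ e ∈ B, cross Z e) ∧
        (∀ Z : Finset W, u ∉ Z → v ∈ Z → ∑ v ∈ Z, b v + c ≤ ∑ e ∈ B, cross Z e) := by
      have key : ∀ Z Y : Finset W, u ∈ Z → v ∉ Z → u ∉ Y → v ∈ Y →
          ∑ v ∈ Z, b v + ∑ v ∈ Y, b v ≤ ∑ e ∈ B, cross Z e + ∑ e ∈ B, cross Y e := by
        intro Z Y h1 h2 h3 h4
        have e1 := hZ (Z ∩ Y)
        have e2 := hZ (Z ∪ Y)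
        have e3 := Finset.sum_union_inter (s₁ := Z) (s₂ := Y) (f := b)
        have e4 := Finset.sum_le_sum (s := B) (fun e _ => cross_submod Z Y e)
        rw [Finset.sum_add_distrib, Finset.sum_add_distrib] at e4
        rw [Finset.sum_insert he] at e1 e2
        have e5 : cross (Z ∩ Y) (u, v) = 0 := by simp [cross, h1, h2, h3, h4]
        have e6 : cross (Z ∪ Y) (u, v) = 0 := by simp [cross, h1, h2, h3, h4]
        linarith
      have hZ1 : ∀ Z : Finset W, u ∈ Z → v ∉ Z → ∑ v ∈ Z, b v ≤ ∑ e ∈ B, cross Z e + 1 := by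
        intro Z h1 h2
        have := hZ Z
        rw [Finset.sum_insert he] at this
        have e5 : cross Z (u, v) = 1 := by simp [cross, h1, h2]
        linarith
      have hZ2 : ∀ Z : Finset W, u ∉ Z → v ∈ Z → ∑ v ∈ Z, b v ≤ ∑ e ∈ B, cross Z e + 1 := by
        intro Z h1 h2
        have := hZ Z
        rw [Finset.sum_insert he] at this
        have e5 : cross Z (u, v) = 1 := by simp [cross, h1, h2]
        linarith
      by_cases hA : ∃ Z : Finset W, u ∈ Z ∧ v ∉ Z ∧ ∑ e ∈ B, cross Z e < ∑ v ∈ Z, b v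
      · obtain ⟨Z, h1, h2, h3⟩ := hA
        refine ⟨1, by norm_num, le_rfl, fun Y hu hv => by linarith [hZ1 Y hu hv], fun Y hu hv => ?_⟩
        have := key Z Y h1 h2 hu hv
        omega
      · push Not at hA
        by_cases hA' : ∃ Z : Finset W, u ∉ Z ∧ v ∈ Z ∧ ∑ e ∈ B, cross Z e < ∑ v ∈ Z, b v
        · obtain ⟨Z, h1, h2, h3⟩ := hA'
          refine ⟨-1, le_rfl, by norm_num, fun Y hu hv => ?_, fun Y hu hv => by
            linarith [hZ2 Y hu hv]⟩
          have := key Y Z hu hv h1 h2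
          omega
        · push Not at hA'
          exact ⟨0, by norm_num, by norm_num, fun Y hu hv => by linarith [hA Y hu hv],
            fun Y hu hv => by linarith [hA' Y hu hv]⟩
    have hsum : ∀ Z : Finset W,
        ∑ x ∈ Z, (b x - c * ((if u = x then 1 else 0) - (if v = x then 1 else 0))) =
          ∑ x ∈ Z, b x - c * ((if u ∈ Z then 1 else 0) - (if v ∈ Z then 1 else 0)) := by
      intro Z
      rw [Finset.sum_sub_distrib, ← Finset.mul_sum, Finset.sum_sub_distrib]
      simp
    obtain ⟨f, hf, hfb⟩ := ih
      (fun x => b x - c * ((if u = x then 1 else 0) - (if v = x then 1 else 0)))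
      (by rw [hsum]; simp [hb])
      (by
        intro Z
        rw [hsum]
        have h0 := hZ Z
        rw [Finset.sum_insert he] at h0
        by_cases h1 : u ∈ Z <;> by_cases h2 : v ∈ Z
        · simp [cross, h1, h2] at h0 ⊢; linarith
        · simp only [h1, h2, if_true, if_false]; linarith [hcu Z h1 h2]
        · simp only [h1, h2, if_true, if_false]; linarith [hcv Z h1 h2]
        · simp [cross, h1, h2] at h0 ⊢; linarith)
    refine ⟨fun e => if e = (u, v) then c else f e, ?_, ?_⟩
    · intro e
      dsimp only
      split_ifs
      · exact ⟨hc1, hc2⟩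
      · exact hf e
    · intro x
      rw [Finset.sum_insert he]
      have h1 := hfb x
      have h2 : ∑ e ∈ B, (if e = (u, v) then c else f e) *
          ((if e.1 = x then 1 else 0) - (if e.2 = x then 1 else 0)) =
          ∑ e ∈ B, f e * ((if e.1 = x then 1 else 0) - (if e.2 = x then 1 else 0)) := by
        refine Finset.sum_congr rfl fun e heB => ?_
        have hne : e ≠ (u, v) := fun h => he (h ▸ heB)
        rw [if_neg hne]
      rw [h2]
      simp only [if_true]
      linarith

lemma exists_bounded_sum {W : Type*} [DecidableEq W] (s : Finset W) :
    ∀ j : ℤ, -(s.card : ℤ) ≤ j → j ≤ s.card →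
      ∃ m : W → ℤ, (∀ u, -1 ≤ m u ∧ m u ≤ 1) ∧ (∀ u, u ∉ s → m u = 0) ∧ ∑ u ∈ s, m u = j := by
  induction s using Finset.induction_on with
  | empty =>
    intro j h1 h2
    have : j = 0 := by simp at h1 h2; omega
    exact ⟨fun _ => 0, by simp, by simp, by simp [this]⟩
  | insert a s ha ih =>
    intro j h1 h2
    rw [Finset.card_insert_of_notMem ha] at h1 h2
    push_cast at h1 h2
    obtain ⟨c, hc1, hc2, hc3, hc4⟩ : ∃ c : ℤ, -1 ≤ c ∧ c ≤ 1 ∧ -(s.card : ℤ) ≤ j - c ∧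
        j - c ≤ s.card := by
      rcases lt_trichotomy j 0 with h | h | h
      · exact ⟨-1, by omega, by omega, by omega, by omega⟩
      · exact ⟨0, by omega, by omega, by omega, by omega⟩
      · exact ⟨1, by omega, by omega, by omega, by omega⟩
    obtain ⟨m, hm1, hm2, hm3⟩ := ih (j - c) hc3 hc4
    refine ⟨fun u => if u = a then c else m u, ?_, ?_, ?_⟩
    · intro u; dsimp only; split_ifs
      · exact ⟨hc1, hc2⟩
      · exact hm1 u
    · intro u hu
      simp only [mem_insert, not_or] at hu
      simp [hu.1, hm2 u hu.2]
    · rw [Finset.sum_insert ha]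
      have : ∑ u ∈ s, (if u = a then c else m u) = ∑ u ∈ s, m u :=
        Finset.sum_congr rfl fun u hu => if_neg (fun h : u = a => ha (h ▸ hu))
      rw [this, hm3]; simp

/-- Greedy colouring from lists: it suffices that the list of `v` is longer than the number of
its conflicting predecessors in the order given by the rank `r`. -/
lemma exists_greedy {W : Type*} [Fintype W] [DecidableEq W] (r : W → ℕ) (back : W → Finset W)
    (hback : ∀ v, ∀ u ∈ back v, r u < r v) (A : W → Finset ℤ)
    (hA : ∀ v, (back v).card < (A v).card) :
    ∃ col : W → ℤ, (∀ v, col v ∈ A v) ∧ ∀ v, ∀ u ∈ back v, col u ≠ col v := by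
  have step : ∀ n : ℕ, ∃ col : W → ℤ, ∀ v, r v < n →
      col v ∈ A v ∧ ∀ u ∈ back v, col u ≠ col v := by
    intro n
    induction n with
    | zero => exact ⟨fun _ => 0, fun v h => absurd h (Nat.not_lt_zero _)⟩
    | succ n ih =>
      obtain ⟨col, hcol⟩ := ih
      have hex : ∀ v, ∃ c ∈ A v, c ∉ (back v).image col := by
        intro v
        apply Finset.exists_mem_notMem_of_card_lt_card
        exact lt_of_le_of_lt Finset.card_image_le (hA v)
      choose g hg1 hg2 using hex
      refine ⟨fun v => if r v < n then col v else g v, fun v hv => ?_⟩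
      by_cases h : r v < n
      · refine ⟨by simpa [h] using (hcol v h).1, fun u hu => ?_⟩
        have hu' : r u < n := (hback v u hu).trans h
        simpa [h, hu'] using (hcol v h).2 u hu
      · refine ⟨by simpa [h] using hg1 v, fun u hu => ?_⟩
        have hu' : r u < n := by have := hback v u hu; omega
        simp only [hu', h, if_true, if_false]
        intro he
        exact hg2 v (Finset.mem_image.2 ⟨u, hu, he⟩)
  obtain ⟨col, hcol⟩ := step (univ.sup r + 1)
  exact ⟨col, fun v => (hcol v (Nat.lt_succ_of_le (Finset.le_sup (mem_univ v)))).1,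
    fun v => (hcol v (Nat.lt_succ_of_le (Finset.le_sup (mem_univ v)))).2⟩

lemma sum_split {W : Type*} [Fintype W] [DecidableEq W] (Z : Finset W) (g : W → W → ℤ) :
    ∑ u, ∑ v, g u v =
        (∑ u ∈ Z, ∑ v ∈ Z, g u v + ∑ u ∈ Z, ∑ v ∈ Zᶜ, g u v) +
        (∑ u ∈ Zᶜ, ∑ v ∈ Z, g u v + ∑ u ∈ Zᶜ, ∑ v ∈ Zᶜ, g u v) := by
  rw [← Finset.sum_add_sum_compl Z, ← Finset.sum_add_distrib, ← Finset.sum_add_distrib]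
  simp_rw [Finset.sum_add_sum_compl]

/-- A maximum cut, encoded by signs `ε`: among the edges leaving any set `Z`, those joining equal
signs weigh at most as much as those joining opposite signs, because switching the signs on `Z`
cannot improve the cut. Here `a` is a symmetric weight matrix. -/
lemma exists_max_cut {W : Type*} [Fintype W] [DecidableEq W] (a : W → W → ℤ)
    (ha : ∀ u v, a u v = a v u) :
    ∃ ε : W → ℤ, (∀ v, ε v = 1 ∨ ε v = -1) ∧
      ∀ Z : Finset W, ∑ u ∈ Z, ∑ v ∈ Zᶜ, a u v * (ε u * ε v) ≤ 0 := by
  obtain ⟨η, hη⟩ := Finite.exists_min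
    (fun η : W → ℤˣ => ∑ u, ∑ v, a u v * ((η u : ℤ) * (η v : ℤ)))
  refine ⟨fun v => η v, fun v => ?_, fun Z => ?_⟩
  · rcases Int.units_eq_one_or (η v) with h | h <;> simp [h]
  · have h := hη (fun v => if v ∈ Z then -η v else η v)
    rw [sum_split Z, sum_split Z] at h
    have c1 : ∑ u ∈ Z, ∑ v ∈ Z, a u v * (((if u ∈ Z then -η u else η u : ℤˣ) : ℤ) *
        ((if v ∈ Z then -η v else η v : ℤˣ) : ℤ)) = ∑ u ∈ Z, ∑ v ∈ Z, a u v * ((η u : ℤ) * η v) :=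
      Finset.sum_congr rfl fun u hu => Finset.sum_congr rfl fun v hv => by simp [hu, hv]
    have c2 : ∑ u ∈ Z, ∑ v ∈ Zᶜ, a u v * (((if u ∈ Z then -η u else η u : ℤˣ) : ℤ) *
        ((if v ∈ Z then -η v else η v : ℤˣ) : ℤ)) =
        - ∑ u ∈ Z, ∑ v ∈ Zᶜ, a u v * ((η u : ℤ) * η v) := by
      rw [← Finset.sum_neg_distrib]
      refine Finset.sum_congr rfl fun u hu => ?_
      rw [← Finset.sum_neg_distrib]
      refine Finset.sum_congr rfl fun v hv => ?_
      rw [mem_compl] at hv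
      simp [hu, hv]
    have c3 : ∑ u ∈ Zᶜ, ∑ v ∈ Z, a u v * (((if u ∈ Z then -η u else η u : ℤˣ) : ℤ) *
        ((if v ∈ Z then -η v else η v : ℤˣ) : ℤ)) =
        - ∑ u ∈ Zᶜ, ∑ v ∈ Z, a u v * ((η u : ℤ) * η v) := by
      rw [← Finset.sum_neg_distrib]
      refine Finset.sum_congr rfl fun u hu => ?_
      rw [← Finset.sum_neg_distrib]
      refine Finset.sum_congr rfl fun v hv => ?_
      rw [mem_compl] at hu
      simp [hu, hv]
    have c4 : ∑ u ∈ Zᶜ, ∑ v ∈ Zᶜ, a u v * (((if u ∈ Z then -η u else η u : ℤˣ) : ℤ) *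
        ((if v ∈ Z then -η v else η v : ℤˣ) : ℤ)) = ∑ u ∈ Zᶜ, ∑ v ∈ Zᶜ, a u v * ((η u : ℤ) * η v) :=
      Finset.sum_congr rfl fun u hu => Finset.sum_congr rfl fun v hv => by
        rw [mem_compl] at hu hv
        simp [hu, hv]
    have c5 : ∑ u ∈ Zᶜ, ∑ v ∈ Z, a u v * ((η u : ℤ) * η v) =
        ∑ u ∈ Z, ∑ v ∈ Zᶜ, a u v * ((η u : ℤ) * η v) := by
      rw [Finset.sum_comm]
      exact Finset.sum_congr rfl fun u _ => Finset.sum_congr rfl fun v _ => by rw [ha v u]; ring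
    rw [c1, c2, c3, c4, c5] at h
    linarith

lemma sum_antisymm {W : Type*} (Z : Finset W) (g : W → W → ℤ) (hg : ∀ u v, g u v = - g v u) :
    ∑ u ∈ Z, ∑ v ∈ Z, g u v = 0 := by
  have h : ∑ u ∈ Z, ∑ v ∈ Z, g u v = - ∑ u ∈ Z, ∑ v ∈ Z, g u v := by
    conv_lhs => rw [Finset.sum_comm]
    rw [← Finset.sum_neg_distrib]
    refine Finset.sum_congr rfl fun u _ => ?_
    rw [← Finset.sum_neg_distrib]
    exact Finset.sum_congr rfl fun v _ => hg v u
  linarith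

/-- Let `ε` encode a maximum cut of the graph `E`, and let `g` be an antisymmetric unit flow on the
edges inside the two sides. Its divergence is also realised by a flow along the cut edges, because
every vertex set is left by at least as many cut edges as inner edges. Orienting the cut edges from
`+1` to `-1` and forgetting signs gives a symmetric function `F` whose vertex sums are the
divergences of `g`, with the sign reversed at the vertices with `ε = -1`. -/
lemma exists_reroute {W : Type*} [Fintype W] [DecidableEq W] (E : W → W → Prop) [DecidableRel E]
    (hE : ∀ u v, E u v → E v u) (ε : W → ℤ) (hε : ∀ v, ε v = 1 ∨ ε v = -1)
    (hcut : ∀ Z : Finset W, ∑ u ∈ Z, ∑ v ∈ Zᶜ, (if E u v then 1 else 0) * (ε u * ε v) ≤ 0)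
    (g : W → W → ℤ) (hg : ∀ u v, g u v = - g v u)
    (hg1 : ∀ u v, g u v ≤ if E u v ∧ ε u = ε v then 1 else 0) :
    ∃ F : W → W → ℤ, (∀ u v, F u v = F v u) ∧ (∀ u v, -1 ≤ F u v ∧ F u v ≤ 1) ∧
      (∀ u v, F u v ≠ 0 → E u v ∧ ε u ≠ ε v) ∧
      ∀ u, ∑ v, F u v = ε u * ∑ v, g u v := by
  classical
  set B : Finset (W × W) := univ.filter fun e => E e.1 e.2 ∧ ε e.1 = 1 ∧ ε e.2 = -1 with hB
  have hBs : ∀ h : W × W → ℤ, ∑ e ∈ B, h e =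
      ∑ u, ∑ v, if E u v ∧ ε u = 1 ∧ ε v = -1 then h (u, v) else 0 := by
    intro h
    rw [hB, Finset.sum_filter, Fintype.sum_prod_type]
  obtain ⟨f, hf, hfb⟩ := exists_flow B (fun u => ∑ v, g u v) (sum_antisymm univ g hg) (by
    intro Z
    have h1 : ∑ u ∈ Z, ∑ v, g u v = ∑ u ∈ Z, ∑ v ∈ Zᶜ, g u v := by
      have : ∑ u ∈ Z, ∑ v, g u v = ∑ u ∈ Z, ∑ v ∈ Z, g u v + ∑ u ∈ Z, ∑ v ∈ Zᶜ, g u v := by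
        rw [← Finset.sum_add_distrib]
        simp_rw [Finset.sum_add_sum_compl]
      rw [this, sum_antisymm Z g hg, zero_add]
    rw [h1, hBs, sum_split Z]
    have z1 : ∑ u ∈ Z, ∑ v ∈ Z,
        (if E u v ∧ ε u = 1 ∧ ε v = -1 then cross Z (u, v) else 0) = 0 :=
      Finset.sum_eq_zero fun u hu => Finset.sum_eq_zero fun v hv => by simp [cross, hu, hv]
    have z2 : ∑ u ∈ Zᶜ, ∑ v ∈ Zᶜ,
        (if E u v ∧ ε u = 1 ∧ ε v = -1 then cross Z (u, v) else 0) = 0 :=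
      Finset.sum_eq_zero fun u hu => Finset.sum_eq_zero fun v hv => by
        rw [mem_compl] at hu hv
        simp [cross, hu, hv]
    rw [z1, z2, zero_add, add_zero, Finset.sum_comm (s := Zᶜ), ← Finset.sum_add_distrib]
    simp_rw [← Finset.sum_add_distrib]
    have h2 := hcut Z
    have h3 : ∑ u ∈ Z, ∑ v ∈ Zᶜ, g u v ≤ ∑ u ∈ Z, ∑ v ∈ Zᶜ,
        (((if E u v ∧ ε u = 1 ∧ ε v = -1 then cross Z (u, v) else 0) +
          (if E v u ∧ ε v = 1 ∧ ε u = -1 then cross Z (v, u) else 0)) +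
          (if E u v then 1 else 0) * (ε u * ε v)) := by
      refine Finset.sum_le_sum fun u hu => Finset.sum_le_sum fun v hv => ?_
      rw [mem_compl] at hv
      have h4 := hg1 u v
      have h5 : E u v ↔ E v u := ⟨hE u v, hE v u⟩
      have c1 : cross Z (u, v) = 1 := by simp [cross, hu, hv]
      have c2 : cross Z (v, u) = 1 := by simp [cross, hu, hv]
      rw [c1, c2]
      by_cases h : E u v
      · have h' := h5.1 h
        rcases hε u with e1 | e1 <;> rcases hε v with e2 | e2 <;> simp [h, h', e1, e2] at h4 ⊢ <;>
          exact h4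
      · have h' : ¬ E v u := fun x => h (h5.2 x)
        simp [h, h'] at h4 ⊢
        exact h4
    have h6 : ∀ p q : W → W → ℤ, ∑ u ∈ Z, ∑ v ∈ Zᶜ, (p u v + q u v) =
        ∑ u ∈ Z, ∑ v ∈ Zᶜ, p u v + ∑ u ∈ Z, ∑ v ∈ Zᶜ, q u v := by
      intro p q
      simp_rw [Finset.sum_add_distrib]
    rw [h6] at h3
    linarith)
  refine ⟨fun u v => (if E u v ∧ ε u = 1 ∧ ε v = -1 then f (u, v) else 0) +
    (if E v u ∧ ε v = 1 ∧ ε u = -1 then f (v, u) else 0), ?_, ?_, ?_, ?_⟩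
  · intro u v; ring
  · intro u v
    have h1 := hf (u, v)
    have h2 := hf (v, u)
    dsimp only
    split_ifs <;> omega
  · intro u v h
    dsimp only at h
    by_cases a : E u v ∧ ε u = 1 ∧ ε v = -1
    · exact ⟨a.1, by rw [a.2.1, a.2.2]; norm_num⟩
    · by_cases b : E v u ∧ ε v = 1 ∧ ε u = -1
      · exact ⟨hE _ _ b.1, by rw [b.2.1, b.2.2]; norm_num⟩
      · simp [a, b] at h
  · intro x
    have h1 := hfb x
    rw [hBs] at h1
    dsimp only at h1
    have h2 : ∑ u, ∑ v, (if E u v ∧ ε u = 1 ∧ ε v = -1 then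
        f (u, v) * ((if u = x then 1 else 0) - if v = x then 1 else 0) else 0) =
        ∑ v, (if E x v ∧ ε x = 1 ∧ ε v = -1 then f (x, v) else 0) -
        ∑ v, (if E v x ∧ ε v = 1 ∧ ε x = -1 then f (v, x) else 0) := by
      have : ∀ u v, (if E u v ∧ ε u = 1 ∧ ε v = -1 then
          f (u, v) * ((if u = x then 1 else 0) - if v = x then 1 else 0) else 0) =
          (if u = x then (if E u v ∧ ε u = 1 ∧ ε v = -1 then f (u, v) else 0) else 0) -
          (if v = x then (if E u v ∧ ε u = 1 ∧ ε v = -1 then f (u, v) else 0) else 0) := by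
        intro u v
        split_ifs <;> simp
      simp_rw [this, Finset.sum_sub_distrib]
      congr 1
      · rw [Finset.sum_comm]; simp
      · simp
    rw [h2] at h1
    rw [h1, Finset.sum_add_distrib]
    rcases hε x with e | e
    · simp [e]
    · simp [e]

/-! ### Labelling a finite graph with an independent set and parity edges -/

/-- The finite labelling theorem. `P` is an independent set and `o` is the indicator of a set of
edges between `P` and its complement having odd degree outside `P` and even degree on `P`.

Start with weight `1` on the edges of `o` and `2` elsewhere; vertices of `P` have even weighted
degree and the others odd. Fix a maximum cut `ε` of the graph outside `P`. A vertex `v` outside `P`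
with `k` conflicting predecessors (adjacent, on its side, smaller in a fixed order) may shift its
degree by `2a` with `-k ≤ a ≤ k + 1`, which leaves `k + 1` values in the residue class modulo `4`
prescribed by its side, so a greedy choice separates adjacent vertices on the same side. The shift
`2a = 2j + 2κ` is realised by changing edges to predecessors by `m v u ∈ {-1, 0, 1}`, of total `j`,
by compensating this at the other ends and doubling it at `v` through a flow `F` along the cut
edges, and by adding `2κ` to one edge of `o` at `v`, which only affects an even colour of `P`. -/
theorem finite_core {W : Type*} [Fintype W] [DecidableEq W] (Adj : W → W → Prop)
    (hsymm : ∀ u v, Adj u v → Adj v u) (hirr : ∀ u, ¬ Adj u u) (P : Finset W)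
    (hP : ∀ p ∈ P, ∀ q ∈ P, ¬ Adj p q) (o : W → W → ZMod 2)
    (hos : ∀ u v, o u v = o v u)
    (hoE : ∀ u v, o u v ≠ 0 → Adj u v ∧ (u ∈ P ↔ v ∉ P))
    (hodd : ∀ v, v ∉ P → ∑ u, o v u = 1) (heven : ∀ v ∈ P, ∑ u, o v u = 0) :
    ∃ w : W → W → ℤ, (∀ u v, Adj u v → 1 ≤ w u v ∧ w u v ≤ 3) ∧
      (∀ u v, w u v = w v u) ∧ (∀ u v, ¬ Adj u v → w u v = 0) ∧
      ∀ u v, Adj u v → ∑ x, w u x ≠ ∑ x, w v x := by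
  classical
  have hsymm' : ∀ u v, Adj u v ↔ Adj v u := fun u v => ⟨hsymm u v, hsymm v u⟩
  -- the graph induced on the complement of `P` and a maximum cut of it
  set E : W → W → Prop := fun u v => Adj u v ∧ u ∉ P ∧ v ∉ P with hE
  have hEs : ∀ u v, E u v → E v u := fun u v h => ⟨hsymm _ _ h.1, h.2.2, h.2.1⟩
  obtain ⟨ε, hε, hcut⟩ := exists_max_cut (fun u v => if E u v then (1 : ℤ) else 0)
    (fun u v => by
      have : E u v ↔ E v u := ⟨hEs u v, hEs v u⟩
      simp only [this])
  -- the initial weighting: odd exactly on the edges of `o`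
  set w0 : W → W → ℤ := fun u v => if Adj u v then 2 - ((o u v).val : ℤ) else 0 with hw0
  have hw0s : ∀ u v, w0 u v = w0 v u := fun u v => by
    simp only [hw0, hsymm' u v, hos u v]
  have hw0c : ∀ u v, ((w0 u v : ℤ) : ZMod 2) = o u v := by
    intro u v
    by_cases h : Adj u v
    · simp only [hw0, h, if_true]
      push_cast
      rw [ZMod.natCast_val, ZMod.cast_id]
      have : ∀ x : ZMod 2, 2 - x = x := by decide
      exact this _
    · have : o u v = 0 := by
        by_contra h'
        exact h (hoE u v h').1
      simp [hw0, h, this]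
  set c0 : W → ℤ := fun u => ∑ v, w0 u v with hc0
  have hc0o : ∀ u, u ∉ P → c0 u % 2 = 1 := by
    intro u hu
    have : ((c0 u : ℤ) : ZMod 2) = ((1 : ℤ) : ZMod 2) := by
      rw [hc0]; push_cast
      simp_rw [hw0c]
      rw [hodd u hu]
    have := (ZMod.intCast_eq_intCast_iff _ _ _).1 this
    exact this
  -- each vertex outside `P` has a neighbour in `P` along an odd edge
  have hq : ∀ u, ∃ x, u ∉ P → o u x = 1 := by
    intro u
    by_cases hu : u ∈ P
    · exact ⟨u, fun h => absurd hu h⟩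
    · obtain ⟨x, -, hx⟩ := Finset.exists_ne_zero_of_sum_ne_zero
        (s := univ) (f := fun x => o u x) (by rw [hodd u hu]; exact one_ne_zero)
      refine ⟨x, fun _ => ?_⟩
      have : ∀ y : ZMod 2, y ≠ 0 → y = 1 := by decide
      exact this _ hx
  choose q hq using hq
  have hqA : ∀ u, u ∉ P → Adj u (q u) ∧ q u ∈ P := by
    intro u hu
    have := hoE u (q u) (by rw [hq u hu]; exact one_ne_zero)
    refine ⟨this.1, ?_⟩
    by_contra h
    exact hu (this.2.2 h)
  set r : W → ℕ := fun u => (Fintype.equivFin W u : ℕ) with hr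
  set back : W → Finset W := fun v => univ.filter fun u => (E v u ∧ ε v = ε u) ∧ r u < r v with hbk
  have hmb : ∀ v u, u ∈ back v ↔ (E v u ∧ ε v = ε u) ∧ r u < r v := by
    intro v u; simp [hbk]
  -- the smallest admissible target colour of `v`
  have hc1 : ∀ v, ∃ κ : ℤ, (κ = 0 ∨ κ = 1) ∧
      (v ∉ P → (c0 v + 2 * (κ - (back v).card)) % 4 = (2 - ε v) % 4) := by
    intro v
    by_cases hv : v ∈ P
    · exact ⟨0, Or.inl rfl, fun h => absurd hv h⟩
    · have h1 := hc0o v hv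
      by_cases h : (c0 v + 2 * (0 - ((back v).card : ℤ))) % 4 = (2 - ε v) % 4
      · exact ⟨0, Or.inl rfl, fun _ => h⟩
      · refine ⟨1, Or.inr rfl, fun _ => ?_⟩
        rcases hε v with e | e <;> rw [e] at h ⊢ <;> omega
  choose κ₀ hκ₀ hκ₁ using hc1
  obtain ⟨col, hcol, hcolb⟩ := exists_greedy r back (fun v u h => ((hmb v u).1 h).2)
    (fun v => (range ((back v).card + 1)).image fun i : ℕ =>
      c0 v + 2 * (κ₀ v - (back v).card) + 4 * i) (by
      intro v
      rw [Finset.card_image_of_injective, Finset.card_range]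
      · omega
      · intro i j h
        dsimp only at h
        omega)
  have hm : ∀ v, ∃ (κ : ℤ) (m : W → ℤ), (κ = 0 ∨ κ = 1) ∧ (v ∈ P → κ = 0) ∧
      (∀ u, -1 ≤ m u ∧ m u ≤ 1) ∧ (∀ u, u ∉ back v → m u = 0) ∧
      (v ∉ P → c0 v + 2 * (∑ u, m u + κ) = col v) := by
    intro v
    by_cases hv : v ∈ P
    · exact ⟨0, fun _ => 0, Or.inl rfl, fun _ => rfl, by simp, by simp, fun h => absurd hv h⟩
    · obtain ⟨i, hi, hi'⟩ := Finset.mem_image.1 (hcol v)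
      rw [mem_range] at hi
      have h1 := hκ₀ v
      set k := (back v).card
      obtain ⟨κ, j, hκ, hj1, hj2, hj⟩ : ∃ κ j : ℤ, (κ = 0 ∨ κ = 1) ∧ -(k : ℤ) ≤ j ∧ j ≤ k ∧
          j + κ = κ₀ v - k + 2 * i := by
        by_cases h : κ₀ v - k + 2 * (i : ℤ) ≤ k
        · exact ⟨0, κ₀ v - k + 2 * i, Or.inl rfl, by omega, by omega, by omega⟩
        · exact ⟨1, κ₀ v - k + 2 * i - 1, Or.inr rfl, by omega, by omega, by omega⟩
      obtain ⟨m, hm1, hm2, hm3⟩ := exists_bounded_sum (back v) j hj1 hj2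
      refine ⟨κ, m, hκ, fun h => absurd h hv, hm1, hm2, fun _ => ?_⟩
      rw [← Finset.sum_subset (Finset.subset_univ (back v)) (fun u _ hu => hm2 u hu), hm3, hj, ← hi']
      ring
  choose κ m hκ hκP hm1 hm2 hm3 using hm
  have hcolε : ∀ v, v ∉ P → col v % 4 = (2 - ε v) % 4 := by
    intro v hv
    obtain ⟨i, hi, hi'⟩ := Finset.mem_image.1 (hcol v)
    have := hκ₁ v hv
    omega
  have hmn : ∀ v u, m v u ≠ 0 → (E v u ∧ ε v = ε u) ∧ m u v = 0 := by
    intro v u h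
    have h1 : u ∈ back v := by
      by_contra h'
      exact h (hm2 v u h')
    rw [hmb] at h1
    refine ⟨h1.1, hm2 u v fun h2 => ?_⟩
    rw [hmb] at h2
    omega
  -- moving the backward changes onto the cut edges
  obtain ⟨F, hFs, hF1, hFE, hFsum⟩ := exists_reroute E hEs ε hε hcut
    (fun u v => ε u * (m u v - m v u))
    (by
      intro u v
      by_cases h : m u v = 0
      · by_cases h' : m v u = 0
        · simp [h, h']
        · rw [(hmn v u h').1.2]; ring
      · rw [(hmn u v h).1.2]; ring)
    (by
      intro u v
      have b1 := hm1 u v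
      have b2 := hm1 v u
      by_cases h : m u v = 0
      · by_cases h' : m v u = 0
        · simp only [h, h', sub_zero, mul_zero]
          split_ifs <;> omega
        · have e := (hmn v u h').1
          rw [if_pos ⟨hEs _ _ e.1, e.2.symm⟩, h]
          rcases hε u with e | e <;> rw [e] <;> omega
      · have e := (hmn u v h).1
        rw [if_pos e, (hmn u v h).2]
        rcases hε u with e | e <;> rw [e] <;> omega)
  set Q : W → W → ℤ := fun u v => if q u = v then 2 * κ u else 0 with hQ
  have hQn : ∀ u v, Q u v ≠ 0 → u ∉ P ∧ q u = v ∧ v ∈ P ∧ Adj u v ∧ o u v = 1 := by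
    intro u v h
    have h1 : q u = v := by
      by_contra h'
      exact h (if_neg h')
    have h2 : u ∉ P := by
      intro h'
      apply h
      simp [hQ, hκP u h']
    exact ⟨h2, h1, h1 ▸ (hqA u h2).2, h1 ▸ (hqA u h2).1, h1 ▸ hq u h2⟩
  have hQ2 : ∀ u v, Q u v = 0 ∨ Q u v = 2 := by
    intro u v
    simp only [hQ]
    split_ifs
    · rcases hκ u with h | h <;> simp [h]
    · simp
  set w : W → W → ℤ := fun u v => w0 u v + (m u v + m v u) + F u v + (Q u v + Q v u) with hw
  have hval : ∀ x : ZMod 2, x.val = 0 ∨ x.val = 1 := by decide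
  have hout : ∀ u v, ¬ E u v → m u v = 0 ∧ m v u = 0 ∧ F u v = 0 := by
    intro u v h
    refine ⟨?_, ?_, ?_⟩
    · by_contra h'; exact h (hmn _ _ h').1.1
    · by_contra h'; exact h (hEs _ _ (hmn _ _ h').1.1)
    · by_contra h'; exact h (hFE _ _ h').1
  have hws : ∀ u v, w u v = w v u := fun u v => by
    simp only [hw]; rw [hw0s u v, hFs u v]; ring
  -- the colours
  have hwU : ∀ u, u ∉ P → ∑ v, w u v = col u := by
    intro u hu
    simp only [hw, Finset.sum_add_distrib]
    have h1 : ∑ v, Q v u = 0 := Finset.sum_eq_zero fun v _ => by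
      by_contra h
      exact hu (hQn v u h).2.2.1
    have h2 : ∑ v, Q u v = 2 * κ u := by simp [hQ]
    have h3 : ∑ v, F u v = ∑ v, m u v - ∑ v, m v u := by
      rw [hFsum, Finset.mul_sum, ← Finset.sum_sub_distrib]
      refine Finset.sum_congr rfl fun v _ => ?_
      rcases hε u with e | e <;> rw [e] <;> ring
    have h4 := hm3 u hu
    rw [h1, h2, h3]
    simp only [hc0] at h4
    linarith
  have hwP : ∀ u, u ∈ P → (∑ v, w u v) % 2 = 0 := by
    intro u hu
    have h1 : ((∑ v, w u v : ℤ) : ZMod 2) = ((0 : ℤ) : ZMod 2) := by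
      push_cast
      rw [← heven u hu]
      refine Finset.sum_congr rfl fun v _ => ?_
      obtain ⟨a1, a2, a3⟩ := hout u v fun h => h.2.1 hu
      have a4 : Q u v = 0 := by
        by_contra h
        exact (hQn u v h).1 hu
      simp only [hw, a1, a2, a3, a4]
      rcases hQ2 v u with h | h <;> rw [h] <;> push_cast <;> rw [hw0c]
      · simp
      · have : (2 : ZMod 2) = 0 := by decide
        simp [this]
    have := (ZMod.intCast_eq_intCast_iff _ _ _).1 h1
    exact this
  have hodd' : ∀ u, u ∉ P → (∑ v, w u v) % 2 = 1 := by
    intro u hu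
    rw [hwU u hu]
    have := hcolε u hu
    rcases hε u with e | e <;> rw [e] at this <;> omega
  refine ⟨w, ?_, hws, ?_, ?_⟩
  · have main : ∀ u v, Adj u v → u ∉ P → 1 ≤ w u v ∧ w u v ≤ 3 := by
      intro u v h hu
      by_cases hv : v ∈ P
      · obtain ⟨a1, a2, a3⟩ := hout u v fun h => h.2.2 hv
        have a4 : Q v u = 0 := by
          by_contra h
          exact (hQn v u h).1 hv
        simp only [hw, hw0, h, a1, a2, a3, a4, if_true]
        rcases hQ2 u v with h1 | h1
        · rcases hval (o u v) with h2 | h2 <;> rw [h1, h2] <;> norm_num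
        · have h2 := (hQn u v (by rw [h1]; norm_num)).2.2.2.2
          have h3 : (o u v).val = 1 := by rw [h2]; rfl
          rw [h1, h3]; norm_num
      · have h0 : o u v = 0 := by
          by_contra h'
          exact hu ((hoE u v h').2.2 hv)
        have h0' : (o u v).val = 0 := by rw [h0]; rfl
        have a4 : Q v u = 0 := by
          by_contra h
          exact hu (hQn v u h).2.2.1
        have a5 : Q u v = 0 := by
          by_contra h
          exact hv (hQn u v h).2.2.1
        have b1 := hm1 u v
        have b2 := hm1 v u
        have b3 := hF1 u v
        have b4 : m u v ≠ 0 → m v u = 0 ∧ F u v = 0 := fun h =>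
          ⟨(hmn u v h).2, by
            by_contra h'
            exact (hFE u v h').2 (hmn u v h).1.2⟩
        have b5 : m v u ≠ 0 → F u v = 0 := fun h => by
            by_contra h'
            exact (hFE u v h').2 (hmn v u h).1.2.symm
        simp only [hw, hw0, h, a4, a5, h0', if_true]
        by_cases c1 : m u v = 0
        · by_cases c2 : m v u = 0
          · rw [c1, c2]; push_cast; omega
          · rw [c1, b5 c2]; push_cast; omega
        · rw [(b4 c1).1, (b4 c1).2]; push_cast; omega
    intro u v h
    by_cases hu : u ∈ P
    · rw [hws]
      exact main v u (hsymm _ _ h) fun hv => hP u hu v hv h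
    · exact main u v h hu
  · intro u v h
    obtain ⟨a1, a2, a3⟩ := hout u v fun h' => h h'.1
    have a4 : Q v u = 0 := by
      by_contra h'
      exact h (hsymm _ _ (hQn v u h').2.2.2.1)
    have a5 : Q u v = 0 := by
      by_contra h'
      exact h (hQn u v h').2.2.2.1
    simp [hw, hw0, h, a1, a2, a3, a4, a5]
  · intro u v h heq
    by_cases hu : u ∈ P
    · have hv : v ∉ P := fun hv => hP u hu v hv h
      have := hwP u hu
      have := hodd' v hv
      omega
    · by_cases hv : v ∈ P
      · have := hwP v hv
        have := hodd' u hu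
        omega
      · rw [hwU u hu, hwU v hv] at heq
        by_cases he : ε u = ε v
        · have hne : r u ≠ r v := by
            intro h'
            have huv : u = v := (Fintype.equivFin W).injective (Fin.ext h')
            exact hirr v (huv ▸ h)
          rcases lt_or_gt_of_ne hne with hlt | hlt
          · exact hcolb v u ((hmb v u).2 ⟨⟨⟨hsymm _ _ h, hv, hu⟩, he.symm⟩, hlt⟩) heq
          · exact hcolb u v ((hmb u v).2 ⟨⟨⟨h, hu, hv⟩, he⟩, hlt⟩) heq.symm
        · have h1 := hcolε u hu
          have h2 := hcolε v hv
          rcases hε u with e1 | e1 <;> rcases hε v with e2 | e2 <;> rw [e1] at h1 he <;>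
            rw [e2] at h2 he <;> omega

/-! ### Parity edge sets and dominating independent sets -/

/-- `χ` is the mod 2 degree function of a subset of the edges of `H`. -/
def IsBoundary {W : Type*} [Fintype W] (H : W → W → Prop) (χ : W → ZMod 2) : Prop :=
  ∃ o : W → W → ZMod 2, (∀ u v, o u v = o v u) ∧ (∀ u v, o u v ≠ 0 → H u v) ∧
    ∀ v, ∑ u, o v u = χ v

lemma IsBoundary.zero {W : Type*} [Fintype W] (H : W → W → Prop) :
    IsBoundary H fun _ => 0 :=
  ⟨fun _ _ => 0, by simp, by simp, by simp⟩

lemma IsBoundary.add {W : Type*} [Fintype W] {H : W → W → Prop} {χ ψ : W → ZMod 2}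
    (h1 : IsBoundary H χ) (h2 : IsBoundary H ψ) : IsBoundary H fun v => χ v + ψ v := by
  obtain ⟨o, a1, a2, a3⟩ := h1
  obtain ⟨o', b1, b2, b3⟩ := h2
  refine ⟨fun u v => o u v + o' u v, fun u v => by dsimp only; rw [a1 u v, b1 u v], fun u v h => ?_,
    fun v => by rw [Finset.sum_add_distrib, a3, b3]⟩
  by_cases h' : o u v = 0
  · exact b2 u v fun h'' => h (by dsimp only; rw [h', h'', add_zero])
  · exact a2 u v h'

lemma IsBoundary.pair {W : Type*} [Fintype W] [DecidableEq W] {H : W → W → Prop}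
    (hH : ∀ u v, H u v → H v u) {a b : W} (hab : Relation.ReflTransGen H a b) :
    IsBoundary H fun v => (if v = a then 1 else 0) + (if v = b then 1 else 0) := by
  induction hab with
  | refl =>
    have : (fun v => (if v = a then (1 : ZMod 2) else 0) + (if v = a then 1 else 0)) =
        fun _ => 0 := funext fun v => CharTwo.add_self_eq_zero _
    rw [this]
    exact IsBoundary.zero H
  | @tail b c _ hbc ih =>
    have hedge : IsBoundary H fun v => (if v = b then 1 else 0) + (if v = c then 1 else 0) := by
      refine ⟨fun u v => (if u = b then (if v = c then 1 else 0) else 0) +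
        (if u = c then (if v = b then 1 else 0) else 0), fun u v => ?_, fun u v h => ?_,
        fun v => ?_⟩
      · dsimp only
        rw [add_comm]
        congr 1 <;> split_ifs <;> rfl
      · by_cases h1 : u = b ∧ v = c
        · rw [h1.1, h1.2]; exact hbc
        · by_cases h2 : u = c ∧ v = b
          · rw [h2.1, h2.2]; exact hH _ _ hbc
          · exfalso
            apply h
            dsimp only
            rw [← ite_and, ← ite_and, if_neg h1, if_neg h2, add_zero]
      · rw [Finset.sum_add_distrib]
        congr 1 <;> split_ifs <;> simp
    have h := ih.add hedge
    convert h using 2 with v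
    have : ∀ x y z : ZMod 2, x + z = x + y + (y + z) := by decide
    exact this _ _ _

/-- In a connected graph, every even set of vertices is the set of odd-degree vertices of some set
of edges. -/
lemma exists_join {W : Type*} [Fintype W] [DecidableEq W] {H : W → W → Prop}
    (hH : ∀ u v, H u v → H v u) (hc : ∀ u v, Relation.ReflTransGen H u v)
    (U : Finset W) (hU : (U.card : ZMod 2) = 0) :
    IsBoundary H fun v => if v ∈ U then 1 else 0 := by
  by_cases hne : Nonempty W
  · obtain ⟨r⟩ := hne
    have key : ∀ S : Finset W, IsBoundary H fun v =>
        ∑ u ∈ S, ((if v = u then 1 else 0) + (if v = r then 1 else 0)) := by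
      intro S
      induction S using Finset.induction_on with
      | empty => simpa using IsBoundary.zero H
      | insert a S ha ih =>
        simp_rw [Finset.sum_insert ha]
        exact (IsBoundary.pair hH (hc a r)).add ih
    convert key U using 2 with v
    rw [Finset.sum_add_distrib, Finset.sum_const, nsmul_eq_mul, hU, zero_mul, add_zero,
      Finset.sum_ite_eq]
  · exact ⟨fun _ _ => 0, by simp, by simp, fun v => absurd ⟨v⟩ hne⟩

/-- The bipartite graph of edges between `P` and its complement. -/
def Bip {W : Type*} (Adj : W → W → Prop) (P : Finset W) (u v : W) : Prop :=
  Adj u v ∧ (u ∈ P ↔ v ∉ P)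

lemma Bip.symm {W : Type*} {Adj : W → W → Prop} (hsymm : ∀ u v, Adj u v → Adj v u)
    {P : Finset W} (u v : W) (h : Bip Adj P u v) : Bip Adj P v u :=
  ⟨hsymm _ _ h.1, by have := h.2; tauto⟩

lemma rtg_symm {W : Type*} {H : W → W → Prop} (hH : ∀ u v, H u v → H v u) {u v : W}
    (h : Relation.ReflTransGen H u v) : Relation.ReflTransGen H v u := by
  induction h with
  | refl => exact .refl
  | tail _ h ih => exact (Relation.ReflTransGen.single (hH _ _ h)).trans ih

/-- A path leaving a set crosses its border along some edge. -/
lemma exists_exit {W : Type*} {H : W → W → Prop} (D : W → Prop) {a b : W}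
    (h : Relation.ReflTransGen H a b) (ha : D a) (hb : ¬ D b) :
    ∃ y z, D y ∧ ¬ D z ∧ H y z := by
  induction h with
  | refl => exact absurd ha hb
  | @tail y z _ hyz ih =>
    by_cases hy : D y
    · exact ⟨y, z, hy, hb, hyz⟩
    · exact ih hy

/-- Admissible sets: independent, invariant under `t`, and connected inside the bipartite graph
they span with their complement. -/
structure Good {W : Type*} (Adj : W → W → Prop) (t : W → W) (P : Finset W) : Prop where
  indep : ∀ p ∈ P, ∀ q ∈ P, ¬ Adj p q
  inv : ∀ p ∈ P, t p ∈ P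
  conn : ∀ p ∈ P, ∀ q ∈ P, Relation.ReflTransGen (Bip Adj P) p q
  nonempty : P.Nonempty

/-- A maximal admissible set is dominating: otherwise some `z` at distance two from it can be added
together with `t z`. -/
lemma exists_dominating {W : Type*} [Fintype W] [DecidableEq W] {Adj : W → W → Prop}
    (hsymm : ∀ u v, Adj u v → Adj v u) (hirr : ∀ u, ¬ Adj u u)
    (hconn : ∀ u v, Relation.ReflTransGen Adj u v) {t : W → W} (htt : ∀ v, t (t v) = v)
    (htA : ∀ u v, Adj u v → Adj (t u) (t v)) (htn : ∀ v, ¬ Adj v (t v))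
    {P0 : Finset W} (hP0 : Good Adj t P0) :
    ∃ P, Good Adj t P ∧ ∀ z, z ∉ P → ∃ p ∈ P, Adj p z := by
  classical
  obtain ⟨P, hPm⟩ := Finset.exists_maximal (s := univ.filter fun P => Good Adj t P)
    ⟨P0, by simpa using hP0⟩
  have hP : Good Adj t P := by simpa using hPm.1
  refine ⟨P, hP, ?_⟩
  by_contra! hz
  obtain ⟨z0, hz0, hz0'⟩ := hz
  obtain ⟨p0, hp0⟩ := hP.nonempty
  obtain ⟨y, z, hy, hz, hyz⟩ := exists_exit (fun x => x ∈ P ∨ ∃ p ∈ P, Adj p x) (hconn p0 z0)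
    (Or.inl hp0) (by push Not; exact ⟨hz0, hz0'⟩)
  push Not at hz
  obtain ⟨hzP, hzN⟩ := hz
  have hyP : y ∉ P := fun h => hzN y h hyz
  obtain ⟨p, hp, hpy⟩ := hy.resolve_left hyP
  have htP : ∀ x, t x ∈ P → x ∈ P := fun x h => htt x ▸ hP.inv _ h
  have hzN' : ∀ q ∈ P, ¬ Adj q (t z) := fun q hq h => by
    have := htA _ _ h
    rw [htt] at this
    exact hzN _ (hP.inv q hq) this
  have hyz' : y ≠ z := fun h => hirr z (h ▸ hyz)
  have hytz : y ≠ t z := fun h => htn z (hsymm _ _ (h ▸ hyz))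
  set P' : Finset W := insert z (insert (t z) P) with hP'
  have hmem : ∀ x, x ∈ P' ↔ x = z ∨ x = t z ∨ x ∈ P := fun x => by simp [hP']
  have hsub : ∀ u v, Bip Adj P u v → Bip Adj P' u v := by
    intro u v h
    refine ⟨h.1, ?_⟩
    rw [hmem, hmem]
    have h2 := h.2
    by_cases hu : u ∈ P
    · have hv := h2.1 hu
      have h3 : v ≠ z := fun e => hzN u hu (e ▸ h.1)
      have h4 : v ≠ t z := fun e => hzN' u hu (e ▸ h.1)
      tauto
    · have hv : v ∈ P := by tauto
      have h3 : u ≠ z := fun e => hzN v hv (hsymm _ _ (e ▸ h.1))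
      have h4 : u ≠ t z := fun e => hzN' v hv (hsymm _ _ (e ▸ h.1))
      tauto
  have hyP' : y ∉ P' := by rw [hmem]; tauto
  have htyP' : t y ∉ P' := by
    rw [hmem]
    rintro (h | h | h)
    · exact hytz (by rw [← h, htt])
    · exact hyz' (by rw [← htt y, h, htt])
    · exact hyP (htP _ h)
  have hbz : Relation.ReflTransGen (Bip Adj P') p z :=
    (Relation.ReflTransGen.single (b := y)
      ⟨hpy, by rw [hmem p]; tauto⟩).tail ⟨hyz, by rw [hmem z]; tauto⟩
  have hbtz : Relation.ReflTransGen (Bip Adj P') (t p) (t z) :=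
    (Relation.ReflTransGen.single (b := t y)
      ⟨htA _ _ hpy, by rw [hmem (t p)]; have := hP.inv p hp; tauto⟩).tail
      ⟨htA _ _ hyz, by rw [hmem (t z)]; tauto⟩
  have hPP : ∀ q ∈ P, Relation.ReflTransGen (Bip Adj P') p q := fun q hq =>
    Relation.ReflTransGen.mono hsub _ _ (hP.conn p hp q hq)
  have hall : ∀ q ∈ P', Relation.ReflTransGen (Bip Adj P') p q := by
    intro q hq
    rcases (hmem q).1 hq with rfl | rfl | h
    · exact hbz
    · exact (hPP _ (hP.inv p hp)).trans hbtz
    · exact hPP q h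
  have hgood : Good Adj t P' := by
    refine ⟨?_, ?_, ?_, ⟨z, (hmem z).2 (Or.inl rfl)⟩⟩
    · intro a ha b hb hab
      rcases (hmem a).1 ha with rfl | rfl | ha' <;> rcases (hmem b).1 hb with rfl | rfl | hb'
      · exact hirr _ hab
      · exact htn _ hab
      · exact hzN _ hb' (hsymm _ _ hab)
      · exact htn _ (hsymm _ _ hab)
      · exact hirr _ hab
      · exact hzN' _ hb' (hsymm _ _ hab)
      · exact hzN _ ha' hab
      · exact hzN' _ ha' hab
      · exact hP.indep _ ha' _ hb' hab
    · intro a ha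
      rw [hmem]
      rcases (hmem a).1 ha with rfl | rfl | ha'
      · tauto
      · rw [htt]; tauto
      · exact Or.inr (Or.inr (hP.inv _ ha'))
    · intro a ha b hb
      exact (rtg_symm (Bip.symm hsymm) (hall a ha)).trans (hall b hb)
  have hle : P' ≤ P := hPm.2 (by simpa using hgood) (fun x hx => (hmem x).2 (Or.inr (Or.inr hx)))
  exact hzP (hle ((hmem z).2 (Or.inl rfl)))

/-- A finite connected graph with a free involutive automorphism `t` that moves no vertex to a
neighbour has a vertex-colouring `{1, 2, 3}`-labelling as soon as it has an admissible set. The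
involution is only used to make the complement of `P` even, so that an edge set `o` as in
`finite_core` exists. -/
theorem finite_labelling {W : Type*} [Fintype W] [DecidableEq W] {Adj : W → W → Prop}
    (hsymm : ∀ u v, Adj u v → Adj v u) (hirr : ∀ u, ¬ Adj u u)
    (hconn : ∀ u v, Relation.ReflTransGen Adj u v) {t : W → W} (htt : ∀ v, t (t v) = v)
    (htf : ∀ v, t v ≠ v)
    (htA : ∀ u v, Adj u v → Adj (t u) (t v)) (htn : ∀ v, ¬ Adj v (t v))
    {P0 : Finset W} (hP0 : Good Adj t P0) :
    ∃ w : W → W → ℤ, (∀ u v, Adj u v → 1 ≤ w u v ∧ w u v ≤ 3) ∧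
      (∀ u v, w u v = w v u) ∧ (∀ u v, ¬ Adj u v → w u v = 0) ∧
      ∀ u v, Adj u v → ∑ x, w u x ≠ ∑ x, w v x := by
  classical
  obtain ⟨P, hP, hdom⟩ := exists_dominating hsymm hirr hconn htt htA htn hP0
  have hc : ∀ u v, Relation.ReflTransGen (Bip Adj P) u v := by
    obtain ⟨p0, hp0⟩ := hP.nonempty
    have h1 : ∀ u, Relation.ReflTransGen (Bip Adj P) p0 u := by
      intro u
      by_cases hu : u ∈ P
      · exact hP.conn _ hp0 _ hu
      · obtain ⟨p, hp, hpu⟩ := hdom u hu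
        exact (hP.conn _ hp0 _ hp).tail ⟨hpu, by tauto⟩
    exact fun u v => (rtg_symm (Bip.symm hsymm) (h1 u)).trans (h1 v)
  have hU : ((Pᶜ).card : ZMod 2) = 0 := by
    have h := Finset.sum_involution (s := Pᶜ) (f := fun _ => (1 : ZMod 2)) (fun v _ => t v)
      (fun _ _ => by decide) (fun v _ _ => htf v)
      (fun v hv => by
        rw [mem_compl] at hv ⊢
        exact fun h => hv (htt v ▸ hP.inv _ h))
      (fun v _ => htt v)
    simpa using h
  obtain ⟨o, ho1, ho2, ho3⟩ := exists_join (Bip.symm hsymm) hc Pᶜ hU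
  refine finite_core Adj hsymm hirr P hP.indep o ho1 ho2 (fun v hv => ?_) (fun v hv => ?_)
  · rw [ho3]; simp [hv]
  · rw [ho3]; simp [hv]

/-! ### Lattices and the periodic shortest path -/

/-- There is a finite index sublattice `Λ` of `Nℤ^d` containing exactly every fourth multiple of
`N • l`. -/
lemma exists_sublattice {d : ℕ} (N : ℕ) (hN : 0 < N) (l : Fin d → ℤ) (hl : l ≠ 0) :
    ∃ (Λ : AddSubgroup (Fin d → ℤ)) (K : ℕ), 0 < K ∧
      (∀ n ∈ Λ, ∀ i, (N : ℤ) ∣ n i) ∧ (∀ k : ℤ, k • ((N : ℤ) • l) ∈ Λ ↔ 4 ∣ k) ∧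
      ∀ a : Fin d → ℤ, (K : ℤ) • a ∈ Λ := by
  obtain ⟨i, hi⟩ := Function.ne_iff.1 hl
  rw [Pi.zero_apply] at hi
  have hN' : (N : ℤ) ≠ 0 := by exact_mod_cast hN.ne'
  refine ⟨{ carrier := {n | (∀ k, (N : ℤ) ∣ n k) ∧ 4 * (N * l i) ∣ n i}
            zero_mem' := by simp
            add_mem' := fun {a b} ha hb =>
              ⟨fun k => dvd_add (ha.1 k) (hb.1 k), dvd_add ha.2 hb.2⟩
            neg_mem' := fun {a} ha => ⟨fun k => (dvd_neg).2 (ha.1 k), (dvd_neg).2 ha.2⟩ },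
    4 * (N * (l i).natAbs), ?_, fun n hn => hn.1, ?_, ?_⟩
  · have := Int.natAbs_pos.2 hi
    positivity
  · intro k
    constructor
    · rintro ⟨-, h⟩
      simp only [Pi.smul_apply, smul_eq_mul] at h
      exact Int.dvd_of_mul_dvd_mul_right (mul_ne_zero hN' hi) h
    · intro h
      refine ⟨fun j => ?_, ?_⟩ <;> simp only [Pi.smul_apply, smul_eq_mul]
      · exact Dvd.intro _ (by ring : (N : ℤ) * (k * l j) = _)
      · exact mul_dvd_mul_right h _
  · intro a
    refine ⟨fun j => ?_, ?_⟩ <;> simp only [Pi.smul_apply, smul_eq_mul] <;> push_cast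
    · exact Dvd.intro _ (by ring : (N : ℤ) * (4 * |l i| * a j) = _)
    · refine Dvd.dvd.mul_right ?_ _
      exact mul_dvd_mul_left _ (mul_dvd_mul_left _ ((dvd_abs _ _).2 dvd_rfl))

/-- Up to translation there are finitely many pairs of vertices at distance at most two, so for
large `N` a nonzero vector of `Nℤ^d` never moves a vertex to one at distance one or two. -/
lemma exists_scale {d : ℕ} {X : Type*} [AddAction (Fin d → ℤ) X] {Adj : X → X → Prop}
    (hirr : ∀ u, ¬ Adj u u) (hsymm : ∀ u v, Adj u v → Adj v u)
    (hfree : ∀ (a : Fin d → ℤ) (x : X), a +ᵥ x = x → a = 0)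
    (hinv : ∀ (a : Fin d → ℤ) x y, Adj x y → Adj (a +ᵥ x) (a +ᵥ y))
    (hloc : ∀ x, {y | Adj x y}.Finite)
    (S : Finset X) (hS : ∀ x, ∃ (a : Fin d → ℤ), ∃ s ∈ S, x = a +ᵥ s) :
    ∃ N : ℕ, 0 < N ∧ ∀ n : Fin d → ℤ, (∀ i, (N : ℤ) ∣ n i) →
      (∀ x, ¬ Adj x (n +ᵥ x)) ∧ ∀ x y, Adj y x → Adj y (n +ᵥ x) → n = 0 := by
  have hinj : ∀ s : X, Function.Injective fun a : Fin d → ℤ => a +ᵥ s := by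
    intro s a b h
    have h' : a +ᵥ s = b +ᵥ s := h
    have : (-b + a) +ᵥ s = s := by rw [add_vadd, h', neg_vadd_vadd]
    have := hfree _ _ this
    rw [neg_add_eq_zero] at this
    exact this.symm
  have hfin : (⋃ s ∈ S, ({a : Fin d → ℤ | Adj s (a +ᵥ s)} ∪
      ⋃ y ∈ {y | Adj s y}, {a : Fin d → ℤ | Adj y (a +ᵥ s)})).Finite := by
    refine Set.Finite.biUnion S.finite_toSet fun s _ => Set.Finite.union ?_ ?_
    · exact (hloc s).preimage (hinj s).injOn
    · exact Set.Finite.biUnion (hloc s) fun y _ => (hloc y).preimage (hinj s).injOn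
  refine ⟨1 + ∑ a ∈ hfin.toFinset, ∑ i, (a i).natAbs, by omega, fun n hn => ?_⟩
  have hsmall : n ∈ hfin.toFinset → n = 0 := by
    intro h
    funext i
    refine Int.eq_zero_of_abs_lt_dvd (hn i) ?_
    rw [Int.abs_eq_natAbs]
    have h1 : (n i).natAbs ≤ ∑ i, (n i).natAbs :=
      Finset.single_le_sum (f := fun i => (n i).natAbs) (fun _ _ => Nat.zero_le _) (mem_univ i)
    have h2 : ∑ i, (n i).natAbs ≤ ∑ a ∈ hfin.toFinset, ∑ i, (a i).natAbs :=
      Finset.single_le_sum (f := fun a : Fin d → ℤ => ∑ i, (a i).natAbs)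
        (fun _ _ => Nat.zero_le _) h
    have : (n i).natAbs < 1 + ∑ a ∈ hfin.toFinset, ∑ i, (a i).natAbs := by omega
    exact_mod_cast this
  have hback : ∀ (b : Fin d → ℤ) (x : X), -b +ᵥ (n +ᵥ (b +ᵥ x)) = n +ᵥ x := by
    intro b x
    rw [vadd_vadd, vadd_vadd]
    congr 1
    abel
  constructor
  · intro x hx
    obtain ⟨b, s, hs, rfl⟩ := hS x
    have h1 := hinv (-b) _ _ hx
    rw [neg_vadd_vadd, hback] at h1
    have h0 := hsmall (hfin.mem_toFinset.2 (Set.mem_biUnion hs (Or.inl h1)))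
    rw [h0, zero_vadd] at h1
    exact hirr _ h1
  · intro x y hx hx'
    obtain ⟨b, s, hs, rfl⟩ := hS x
    have h1 := hinv (-b) _ _ hx'
    have h2 := hsymm _ _ (hinv (-b) _ _ hx)
    rw [hback] at h1
    rw [neg_vadd_vadd] at h2
    exact hsmall (hfin.mem_toFinset.2 (Set.mem_biUnion hs (Or.inr (Set.mem_biUnion h2 h1))))

/-- Take a shortest path among all those joining a vertex to a distinct translate of it under
`Nℤ^d`, and extend it periodically to a two-way infinite path `Y` with period vector `N • l`.
Minimality forbids chords, even up to translation: if `Y i` is adjacent to `μ +ᵥ Y j`, where `μ`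
is in `Nℤ^d` and is either no multiple of the period vector or a multiple of four times it, then
`i - j` is odd. -/
lemma exists_line {d : ℕ} (hd : 1 ≤ d) {X : Type*} [Nonempty X] [AddAction (Fin d → ℤ) X]
    {Adj : X → X → Prop}
    (hsymm : ∀ u v, Adj u v → Adj v u) (hirr : ∀ u, ¬ Adj u u)
    (hconn : ∀ u v, Relation.ReflTransGen Adj u v)
    (hfree : ∀ (a : Fin d → ℤ) (x : X), a +ᵥ x = x → a = 0)
    (hinv : ∀ (a : Fin d → ℤ) x y, Adj x y → Adj (a +ᵥ x) (a +ᵥ y))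
    (N : ℕ) (hN : 0 < N)
    (hN2 : ∀ n : Fin d → ℤ, (∀ i, (N : ℤ) ∣ n i) → ∀ x y, Adj y x → Adj y (n +ᵥ x) → n = 0) :
    ∃ (l : Fin d → ℤ) (L : ℤ) (Y : ℤ → X), l ≠ 0 ∧
      (∀ n, Y (n + L) = ((N : ℤ) • l) +ᵥ Y n) ∧ (∀ n, Adj (Y n) (Y (n + 1))) ∧
      ∀ (i j : ℤ) (μ : Fin d → ℤ), (∀ k, (N : ℤ) ∣ μ k) →
        (∀ k : ℤ, k • ((N : ℤ) • l) = μ → 4 ∣ k) → Adj (Y i) (μ +ᵥ Y j) → (i - j) % 2 = 1 := by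
  classical
  let G : SimpleGraph X := { Adj := Adj, symm := ⟨hsymm⟩, loopless := ⟨hirr⟩ }
  have hG : G.Connected := by
    refine ⟨fun u v => ?_⟩
    rw [SimpleGraph.reachable_iff_reflTransGen]
    exact hconn u v
  have hNd : ∀ l : Fin d → ℤ, ∀ i, (N : ℤ) ∣ ((N : ℤ) • l) i := fun l i => Dvd.intro _ rfl
  have hN' : (N : ℤ) ≠ 0 := by exact_mod_cast hN.ne'
  have hex : ∃ n : ℕ, ∃ (x : X) (l : Fin d → ℤ), l ≠ 0 ∧ G.dist x (((N : ℤ) • l) +ᵥ x) = n := by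
    obtain ⟨x⟩ := ‹Nonempty X›
    refine ⟨_, x, fun _ => 1, ?_, rfl⟩
    intro h
    have := congrFun h ⟨0, hd⟩
    simp at this
  set L := Nat.find hex with hLdef
  obtain ⟨x, l, hl, hdist⟩ := Nat.find_spec hex
  rw [← hLdef] at hdist
  set lam := (N : ℤ) • l with hlam
  have hmin : ∀ (z : X) (n : Fin d → ℤ), (∀ i, (N : ℤ) ∣ n i) → n ≠ 0 →
      L ≤ G.dist z (n +ᵥ z) := by
    intro z n hn hn0
    choose l' hl' using hn
    have e : n = (N : ℤ) • l' := funext fun i => by simp [hl' i]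
    refine Nat.find_min' hex ⟨z, l', ?_, by rw [e]⟩
    rintro rfl
    exact hn0 (by rw [e, smul_zero])
  have hlam0 : lam ≠ 0 := smul_ne_zero hN' hl
  have hLpos : 0 < L := by
    rcases Nat.eq_zero_or_pos L with h | h
    · rw [h] at hdist
      exact absurd (hfree _ _ (hG.dist_eq_zero_iff.1 hdist).symm) hlam0
    · exact h
  obtain ⟨p, hp⟩ := hG.exists_walk_length_eq_dist x (lam +ᵥ x)
  rw [hdist] at hp
  set y : ℕ → X := fun i => p.getVert i with hy
  have hy0 : y 0 = x := p.getVert_zero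
  have hyL : y L = lam +ᵥ y 0 := by rw [hy0]; simp only [hy]; rw [← hp, p.getVert_length]
  have hya : ∀ i, i < L → Adj (y i) (y (i + 1)) := fun i hi =>
    p.adj_getVert_succ (by rw [hp]; exact hi)
  have hyd : ∀ k i, i + k ≤ L → G.dist (y i) (y (i + k)) ≤ k := by
    intro k
    induction k with
    | zero => intro i _; simp
    | succ k ih =>
      intro i h
      have h1 := ih i (by omega)
      have h2 : G.dist (y (i + k)) (y (i + k + 1)) = 1 :=
        SimpleGraph.dist_eq_one_iff_adj.2 (hya (i + k) (by omega))
      have h3 := hG.dist_triangle (u := y i) (v := y (i + k)) (w := y (i + k + 1))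
      rw [← add_assoc]
      omega
  have hyd' : ∀ i j, i ≤ L → j ≤ L → G.dist (y i) (y j) ≤ (i - j) + (j - i) := by
    intro i j hi hj
    rcases le_total i j with h | h
    · obtain ⟨k, rfl⟩ := Nat.exists_eq_add_of_le h
      have := hyd k i hj
      omega
    · obtain ⟨k, rfl⟩ := Nat.exists_eq_add_of_le h
      have := hyd k j hi
      rw [SimpleGraph.dist_comm]
      omega
  -- a shortest path has no chords
  have hchord : ∀ i j, i ≤ j → j ≤ L → Adj (y i) (y j) → j = i + 1 := by
    intro i j hij hj h
    have hne : i ≠ j := fun e => hirr _ (e ▸ h)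
    have h1 := hyd' 0 i (by omega) (by omega)
    have h2 := hyd' j L hj le_rfl
    have h3 : G.dist (y i) (y j) = 1 := SimpleGraph.dist_eq_one_iff_adj.2 h
    have h4 := hG.dist_triangle (u := y 0) (v := y i) (w := y L)
    have h5 := hG.dist_triangle (u := y i) (v := y j) (w := y L)
    have h6 : G.dist (y 0) (y L) = L := by rw [hyL, hy0, hdist]
    omega
  -- up to translation, the path is only adjacent to itself at consecutive indices, counting the
  -- step that closes up the period
  have hkey : ∀ i j (ν : Fin d → ℤ), i < L → j < L → (∀ k, (N : ℤ) ∣ ν k) → Adj (y i) (ν +ᵥ y j) →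
      (ν = 0 ∧ (i = j + 1 ∨ j = i + 1)) ∨ (ν = lam ∧ i + 1 = L ∧ j = 0) ∨
      (ν = -lam ∧ i = 0 ∧ j + 1 = L) := by
    intro i j ν hi hj hν h
    by_cases h0 : ν = 0
    · left
      rw [h0, zero_vadd] at h
      refine ⟨h0, ?_⟩
      rcases le_total i j with hij | hij
      · exact Or.inr (hchord i j hij hj.le h)
      · exact Or.inl (hchord j i hij hi.le (hsymm _ _ h))
    · right
      have h1 := hmin (y j) ν hν h0
      have h2 := hG.dist_triangle (u := y j) (v := y i) (w := ν +ᵥ y j)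
      have h3 : G.dist (y i) (ν +ᵥ y j) = 1 := SimpleGraph.dist_eq_one_iff_adj.2 h
      have h4 := hyd' j i hj.le hi.le
      rcases (by omega : (i + 1 = L ∧ j = 0) ∨ (i = 0 ∧ j + 1 = L)) with ⟨hi', rfl⟩ | ⟨rfl, hj'⟩
      · left
        have h5 := hya i hi
        rw [hi', hyL] at h5
        have h6 := hN2 (ν - lam) (fun k => dvd_sub (hν k) (hNd l k)) (lam +ᵥ y 0) (y i) h5
          (by rw [vadd_vadd, sub_add_cancel]; exact h)
        exact ⟨sub_eq_zero.1 h6, hi', rfl⟩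
      · right
        have h5 := hya j hj
        rw [hj', hyL] at h5
        have h6 := hN2 (lam + ν) (fun k => dvd_add (hNd l k) (hν k)) (y j) (lam +ᵥ y 0)
          (hsymm _ _ h5) (by rw [add_vadd]; exact hinv lam _ _ h)
        exact ⟨eq_neg_of_add_eq_zero_right h6, rfl, hj'⟩
  have hLz : (0 : ℤ) < L := by exact_mod_cast hLpos
  refine ⟨l, L, fun n => ((n / (L : ℤ)) • lam) +ᵥ y (n % (L : ℤ)).toNat, hl, ?_, ?_, ?_⟩
  · intro n
    dsimp only
    rw [Int.add_emod_right, Int.add_ediv_of_dvd_right dvd_rfl, Int.ediv_self hLz.ne',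
      add_comm (n / _), add_smul, one_smul, add_vadd]
  · intro n
    have h1 := Int.emod_nonneg n hLz.ne'
    have h2 := Int.emod_lt_of_pos n hLz
    have h3 := Int.mul_ediv_add_emod n L
    dsimp only
    by_cases h : n % (L : ℤ) + 1 < L
    · have e : n + 1 = (n % (L : ℤ) + 1) + L * (n / (L : ℤ)) := by linarith
      have e1 : (n + 1) / (L : ℤ) = n / L := by
        rw [e, Int.add_mul_ediv_left _ _ hLz.ne', Int.ediv_eq_zero_of_lt (by omega) h, zero_add]
      have e2 : (n + 1) % (L : ℤ) = n % L + 1 := by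
        rw [e, Int.add_mul_emod_self_left, Int.emod_eq_of_lt (by omega) h]
      rw [e1, e2]
      apply hinv
      have : (n % (L : ℤ) + 1).toNat = (n % (L : ℤ)).toNat + 1 := by omega
      rw [this]
      exact hya _ (by omega)
    · have e : n + 1 = 0 + L * (n / (L : ℤ) + 1) := by
        have : n % (L : ℤ) = L - 1 := by omega
        rw [this] at h3
        linarith
      have e1 : (n + 1) / (L : ℤ) = n / L + 1 := by
        rw [e, Int.add_mul_ediv_left _ _ hLz.ne']; simp
      have e2 : (n + 1) % (L : ℤ) = 0 := by
        rw [e, Int.add_mul_emod_self_left]; simp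
      rw [e1, e2, add_smul, one_smul, add_vadd]
      apply hinv
      have h5 := hya (n % (L : ℤ)).toNat (by omega)
      have : (n % (L : ℤ)).toNat + 1 = L := by omega
      rw [this, hyL] at h5
      exact h5
  · intro i j μ hμ hμ4 h
    have i1 := Int.emod_nonneg i hLz.ne'
    have i2 := Int.emod_lt_of_pos i hLz
    have i3 := Int.mul_ediv_add_emod i L
    have j1 := Int.emod_nonneg j hLz.ne'
    have j2 := Int.emod_lt_of_pos j hLz
    have j3 := Int.mul_ediv_add_emod j L
    dsimp only at h
    set c := i / (L : ℤ)
    set c' := j / (L : ℤ)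
    set i0 := i % (L : ℤ)
    set j0 := j % (L : ℤ)
    have h1 := hinv (-(c • lam)) _ _ h
    rw [neg_vadd_vadd, vadd_vadd, vadd_vadd, add_assoc] at h1
    have hd1 : ∀ k : ℤ, ∀ q, (N : ℤ) ∣ (k • lam) q := fun k q => Dvd.dvd.mul_left (hNd l q) k
    rcases hkey i0.toNat j0.toNat (-(c • lam) + (μ + c' • lam)) (by omega) (by omega)
      (fun q => dvd_add ((dvd_neg).2 (hd1 c q)) (dvd_add (hμ q) (hd1 c' q))) h1 with
      ⟨hν, hij⟩ | ⟨hν, hi0, hj0⟩ | ⟨hν, hi0, hj0⟩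
    · obtain ⟨e, he⟩ := hμ4 (c - c') (by
        rw [neg_add_eq_zero] at hν
        rw [sub_smul, hν]; abel)
      have : (L : ℤ) * c - L * c' = 4 * (L * e) := by rw [← mul_sub, he]; ring
      omega
    · obtain ⟨e, he⟩ := hμ4 (c - c' + 1) (by
        rw [neg_add_eq_iff_eq_add] at hν
        rw [add_smul, sub_smul, one_smul, sub_add_eq_add_sub, ← hν]; abel)
      have : (L : ℤ) * c - L * c' + L = 4 * (L * e) := by
        rw [← mul_sub, (by ring : 4 * ((L : ℤ) * e) = L * (4 * e)), ← he]; ring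
      omega
    · obtain ⟨e, he⟩ := hμ4 (c - c' - 1) (by
        rw [neg_add_eq_iff_eq_add] at hν
        rw [sub_smul, sub_smul, one_smul, sub_right_comm, sub_eq_add_neg (c • lam), ← hν]; abel)
      have : (L : ℤ) * c - L * c' - L = 4 * (L * e) := by
        rw [← mul_sub, (by ring : 4 * ((L : ℤ) * e) = L * (4 * e)), ← he]; ring
      omega

/-! ### The quotient graph -/

/-- The main theorem for a graph on an abstract set `X` with a free action of `ℤ^d` by
automorphisms having finitely many orbits. The labelling is pulled back from the finite quotient
graph by a lattice `Λ`, over which the graph is a covering. -/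
theorem periodic_labelling {d : ℕ} (hd : 1 ≤ d) {X : Type*} [Nonempty X]
    [AddAction (Fin d → ℤ) X] {Adj : X → X → Prop}
    (hsymm : ∀ u v, Adj u v → Adj v u) (hirr : ∀ u, ¬ Adj u u)
    (hconn : ∀ u v, Relation.ReflTransGen Adj u v)
    (hfree : ∀ (a : Fin d → ℤ) (x : X), a +ᵥ x = x → a = 0)
    (hinv : ∀ (a : Fin d → ℤ) x y, Adj x y → Adj (a +ᵥ x) (a +ᵥ y))
    (hloc : ∀ x, {y | Adj x y}.Finite)
    (S : Finset X) (hS : ∀ x, ∃ (a : Fin d → ℤ), ∃ s ∈ S, x = a +ᵥ s) :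
    ∃ K : ℕ, 0 < K ∧ ∃ w : X → X → ℤ, (∀ u v, Adj u v → 1 ≤ w u v ∧ w u v ≤ 3) ∧
      (∀ u v, w u v = w v u) ∧
      (∀ u v, Adj u v → ∑ x ∈ (hloc u).toFinset, w u x ≠ ∑ x ∈ (hloc v).toFinset, w v x) ∧
      ∀ (a : Fin d → ℤ) u v, w (((K : ℤ) • a) +ᵥ u) (((K : ℤ) • a) +ᵥ v) = w u v := by
  classical
  obtain ⟨N, hN, hNp⟩ := exists_scale hirr hsymm hfree hinv hloc S hS
  obtain ⟨l, L, Y, hl, hYL, hYA, hYodd⟩ := exists_line hd hsymm hirr hconn hfree hinv N hN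
    fun n hn => (hNp n hn).2
  obtain ⟨Λ, K, hK, hΛN, hΛ4, hΛK⟩ := exists_sublattice N hN l hl
  set lam := (N : ℤ) • l with hlam
  have hlamN : ∀ k : ℤ, ∀ i, (N : ℤ) ∣ (k • lam) i := fun k i =>
    Dvd.dvd.mul_left (Dvd.intro _ rfl) k
  refine ⟨K, hK, ?_⟩
  -- the finite quotient graph
  let st : Setoid X :=
    { r := fun x y => ∃ μ ∈ Λ, y = μ +ᵥ x
      iseqv :=
        { refl := fun x => ⟨0, Λ.zero_mem, (zero_vadd _ x).symm⟩
          symm := by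
            rintro x y ⟨μ, hμ, rfl⟩
            exact ⟨-μ, Λ.neg_mem hμ, (neg_vadd_vadd _ _).symm⟩
          trans := by
            rintro x y z ⟨μ, hμ, rfl⟩ ⟨ν, hν, rfl⟩
            exact ⟨ν + μ, Λ.add_mem hν hμ, vadd_vadd _ _ _⟩ } }
  let W := Quotient st
  let π : X → W := Quotient.mk st
  have hπs : Function.Surjective π := Quotient.exists_rep
  have hπ : ∀ x y, π x = π y ↔ ∃ μ ∈ Λ, y = μ +ᵥ x := fun x y =>
    ⟨fun h => Quotient.exact h, fun h => Quotient.sound h⟩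
  have hKz : (0 : ℤ) < K := by exact_mod_cast hK
  have : Finite W := by
    refine Finite.of_surjective
      (fun q : S × (Fin d → Fin K) => π ((fun i => ((q.2 i : ℕ) : ℤ)) +ᵥ (q.1 : X))) ?_
    intro p
    obtain ⟨x, rfl⟩ := hπs p
    obtain ⟨a, s, hs, rfl⟩ := hS x
    refine ⟨(⟨s, hs⟩, fun i => ⟨(a i % K).toNat, ?_⟩), ?_⟩
    · have := Int.emod_nonneg (a i) hKz.ne'
      have := Int.emod_lt_of_pos (a i) hKz
      omega
    · rw [hπ]
      refine ⟨(K : ℤ) • fun i => a i / K, hΛK _, ?_⟩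
      rw [vadd_vadd]
      congr 1
      funext i
      have h1 := Int.emod_nonneg (a i) hKz.ne'
      have h2 := Int.mul_ediv_add_emod (a i) K
      simp only [Pi.add_apply, Pi.smul_apply, smul_eq_mul]
      rw [Int.toNat_of_nonneg h1]
      exact h2.symm
  let _ : Fintype W := Fintype.ofFinite W
  let AdjW : W → W → Prop := fun p q => ∃ x y, π x = p ∧ π y = q ∧ Adj x y
  have hAW : ∀ x y, Adj x y → AdjW (π x) (π y) := fun x y h => ⟨x, y, rfl, rfl, h⟩
  have hlift : ∀ x q, AdjW (π x) q → ∃ y, π y = q ∧ Adj x y := by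
    rintro x q ⟨x', y', hx, rfl, h⟩
    obtain ⟨μ, hμ, rfl⟩ := (hπ _ _).1 hx
    exact ⟨μ +ᵥ y', ((hπ _ _).2 ⟨μ, hμ, rfl⟩).symm, hinv _ _ _ h⟩
  have hlift' : ∀ x z, AdjW (π x) (π z) → ∃ μ ∈ Λ, Adj x (μ +ᵥ z) := by
    intro x z h
    obtain ⟨y, hy, hxy⟩ := hlift x _ h
    obtain ⟨μ, hμ, rfl⟩ := (hπ _ _).1 hy.symm
    exact ⟨μ, hμ, hxy⟩
  -- the projection is injective on neighbourhoods
  have huniq : ∀ x y y', Adj x y → Adj x y' → π y = π y' → y = y' := by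
    intro x y y' h h' he
    obtain ⟨μ, hμ, rfl⟩ := (hπ _ _).1 he
    rw [(hNp μ (hΛN μ hμ)).2 y x h h', zero_vadd]
  have hWsymm : ∀ p q, AdjW p q → AdjW q p := by
    rintro p q ⟨x, y, hx, hy, h⟩
    exact ⟨y, x, hy, hx, hsymm _ _ h⟩
  have hWirr : ∀ p, ¬ AdjW p p := by
    intro p h
    obtain ⟨x, rfl⟩ := hπs p
    obtain ⟨μ, hμ, h⟩ := hlift' x x h
    exact (hNp μ (hΛN μ hμ)).1 x h
  have hWconn : ∀ p q, Relation.ReflTransGen AdjW p q := by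
    intro p q
    obtain ⟨x, rfl⟩ := hπs p
    obtain ⟨y, rfl⟩ := hπs q
    exact Relation.ReflTransGen.lift (p := AdjW) π hAW _ _ (hconn x y)
  -- translation by `2 • lam` is an involution of the quotient since `4 • lam ∈ Λ`
  let t : W → W := Quotient.map (fun x => ((2 : ℤ) • lam) +ᵥ x) (by
    rintro x y ⟨μ, hμ, rfl⟩
    exact ⟨μ, hμ, vadd_comm _ _ _⟩)
  have htπ : ∀ x, t (π x) = π (((2 : ℤ) • lam) +ᵥ x) := fun x => rfl
  have htt : ∀ p, t (t p) = p := by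
    intro p
    obtain ⟨x, rfl⟩ := hπs p
    rw [htπ, htπ, eq_comm, hπ]
    refine ⟨(4 : ℤ) • lam, (hΛ4 4).2 dvd_rfl, ?_⟩
    rw [vadd_vadd, ← add_smul]
    norm_num
  have htf : ∀ p, t p ≠ p := by
    intro p h
    obtain ⟨x, rfl⟩ := hπs p
    rw [htπ, eq_comm, hπ] at h
    obtain ⟨μ, hμ, h⟩ := h
    have h0 := hfree (-μ + (2 : ℤ) • lam) x (by rw [add_vadd, h, neg_vadd_vadd])
    rw [neg_add_eq_zero] at h0
    have := (hΛ4 2).1 (h0 ▸ hμ)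
    omega
  have htA : ∀ p q, AdjW p q → AdjW (t p) (t q) := by
    rintro p q ⟨x, y, rfl, rfl, h⟩
    rw [htπ, htπ]
    exact hAW _ _ (hinv _ _ _ h)
  have htn : ∀ p, ¬ AdjW p (t p) := by
    intro p h
    obtain ⟨x, rfl⟩ := hπs p
    rw [htπ] at h
    obtain ⟨μ, hμ, h⟩ := hlift' _ _ h
    rw [vadd_vadd] at h
    exact (hNp _ fun i => dvd_add (hΛN μ hμ i) (hlamN 2 i)).1 x h
  -- the seed: every other vertex of the periodic line
  let P0 : Finset W := univ.filter fun p => ∃ m : ℤ, π (Y (2 * m)) = p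
  have hP0 : ∀ p, p ∈ P0 ↔ ∃ m : ℤ, π (Y (2 * m)) = p := fun p => by simp [P0]
  have hindep : ∀ p ∈ P0, ∀ q ∈ P0, ¬ AdjW p q := by
    intro p hp q hq h
    obtain ⟨m, rfl⟩ := (hP0 _).1 hp
    obtain ⟨m', rfl⟩ := (hP0 _).1 hq
    obtain ⟨μ, hμ, h⟩ := hlift' _ _ h
    have := hYodd (2 * m) (2 * m') μ (hΛN μ hμ) (fun k hk => (hΛ4 k).1 (hk ▸ hμ)) h
    omega
  have hgood : Good AdjW t P0 := by
    refine ⟨hindep, ?_, ?_, ⟨π (Y (2 * 0)), (hP0 _).2 ⟨0, rfl⟩⟩⟩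
    · intro p hp
      obtain ⟨m, rfl⟩ := (hP0 _).1 hp
      rw [htπ, hP0]
      refine ⟨m + L, ?_⟩
      rw [(by ring : 2 * (m + L) = 2 * m + L + L), hYL, hYL, vadd_vadd, two_smul]
    · have hstep : ∀ m : ℤ, Relation.ReflTransGen (Bip AdjW P0) (π (Y (2 * m)))
          (π (Y (2 * (m + 1)))) := by
        intro m
        have a1 := hAW _ _ (hYA (2 * m))
        have a2 := hAW _ _ (hYA (2 * m + 1))
        rw [(by ring : 2 * m + 1 + 1 = 2 * (m + 1))] at a2
        have m1 : π (Y (2 * m)) ∈ P0 := (hP0 _).2 ⟨m, rfl⟩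
        have m2 : π (Y (2 * (m + 1))) ∈ P0 := (hP0 _).2 ⟨m + 1, rfl⟩
        have m3 : π (Y (2 * m + 1)) ∉ P0 := fun h => hindep _ m1 _ h a1
        exact (Relation.ReflTransGen.single ⟨a1, by tauto⟩).tail ⟨a2, by tauto⟩
      have h0 : ∀ m : ℤ, Relation.ReflTransGen (Bip AdjW P0) (π (Y (2 * 0))) (π (Y (2 * m))) := by
        intro m
        induction m using Int.induction_on with
        | zero => exact .refl
        | succ i ih => exact ih.trans (hstep _)
        | pred i ih =>
          have := hstep (-(i : ℤ) - 1)
          rw [sub_add_cancel] at this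
          exact ih.trans (rtg_symm (Bip.symm hWsymm) this)
      intro p hp q hq
      obtain ⟨m, rfl⟩ := (hP0 _).1 hp
      obtain ⟨m', rfl⟩ := (hP0 _).1 hq
      exact (rtg_symm (Bip.symm hWsymm) (h0 m)).trans (h0 m')
  obtain ⟨w, hw1, hw2, hw3, hw4⟩ := finite_labelling hWsymm hWirr hWconn htt htf htA htn hgood
  have hsum : ∀ x, ∑ y ∈ (hloc x).toFinset, w (π x) (π y) = ∑ p, w (π x) p := by
    intro x
    rw [← Finset.sum_image (s := (hloc x).toFinset) (g := π) (f := fun p => w (π x) p)]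
    · refine Finset.sum_subset (Finset.subset_univ _) fun p _ hp => hw3 _ _ fun h => hp ?_
      obtain ⟨y, rfl, hy⟩ := hlift x p h
      exact Finset.mem_image_of_mem _ ((hloc x).mem_toFinset.2 hy)
    · intro y hy y' hy' h
      exact huniq x y y' ((hloc x).mem_toFinset.1 hy) ((hloc x).mem_toFinset.1 hy') h
  refine ⟨fun x y => w (π x) (π y), fun u v h => hw1 _ _ (hAW _ _ h), fun u v => hw2 _ _, ?_, ?_⟩
  · intro u v h
    rw [hsum, hsum]
    exact hw4 _ _ (hAW _ _ h)
  · intro a u v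
    have h : ∀ x, π (((K : ℤ) • a) +ᵥ x) = π x := fun x => ((hπ _ _).2 ⟨_, hΛK a, rfl⟩).symm
    dsimp only
    rw [h, h]

end ZD

/-- A connected, simple, locally finite graph in `ℝ^d` (`d ≥ 1`) which is `ℤ^d`-periodic
admits a vertex-colouring `{1,2,3}`-edge labelling invariant under `(2N)ℤ^d` for some `N > 0`. -/
theorem zd_periodic_123
    (d : ℕ) (hd : 1 ≤ d)
    (V : Set (Fin d → ℝ)) (Adj : (Fin d → ℝ) → (Fin d → ℝ) → Prop)
    (hVAdj : ∀ u v, Adj u v → u ∈ V ∧ v ∈ V)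
    (hsymm : ∀ u v, Adj u v → Adj v u)
    (hirr : ∀ u, ¬ Adj u u)
    (hconn : ∀ u ∈ V, ∀ v ∈ V, Relation.ReflTransGen Adj u v)
    (hlocV : ∀ K : Set (Fin d → ℝ), IsCompact K → (V ∩ K).Finite)
    (hlocN : ∀ u : Fin d → ℝ, {v | Adj u v}.Finite)
    (hper : ∀ t : Fin d → ℤ, IsPeriod V Adj (fun i => (t i : ℝ))) :
    ∃ (N : ℕ), 0 < N ∧
      ∃ w : (Fin d → ℝ) → (Fin d → ℝ) → ℕ,
        (∀ u v, Adj u v → w u v ∈ ({1, 2, 3} : Set ℕ)) ∧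
        (∀ u v, Adj u v → w u v = w v u) ∧
        (∀ u v, Adj u v → wdeg Adj w u ≠ wdeg Adj w v) ∧
        (∀ t : Fin d → ℤ, ∀ u v, Adj u v →
          w (u + fun i => ((2 * N * t i : ℤ) : ℝ)) (v + fun i => ((2 * N * t i : ℤ) : ℝ))
            = w u v) := by
  classical
  rcases V.eq_empty_or_nonempty with hV | ⟨v0, hv0⟩
  · have hno : ∀ u v, ¬ Adj u v := fun u v h => by
      have := (hVAdj u v h).1
      rw [hV] at this
      exact this
    exact ⟨1, one_pos, fun _ _ => 1, fun u v h => absurd h (hno u v),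
      fun u v h => absurd h (hno u v), fun u v h => absurd h (hno u v),
      fun _ u v h => absurd h (hno u v)⟩
  have hmemV : ∀ (a : Fin d → ℤ) (x : Fin d → ℝ), x ∈ V → (x + fun i => (a i : ℝ)) ∈ V := by
    intro a x hx
    rw [← (hper a).1]
    exact ⟨x, hx, rfl⟩
  -- `ℤ^d` acts freely on the vertex set by translation, and `[0, 1]^d` meets every orbit
  let act : AddAction (Fin d → ℤ) V :=
    { vadd := fun a x => ⟨x.1 + fun i => (a i : ℝ), hmemV a x.1 x.2⟩
      zero_vadd := fun x => Subtype.ext (funext fun i => by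
        change x.1 i + ((0 : ℤ) : ℝ) = x.1 i
        simp)
      add_vadd := fun a b x => Subtype.ext (funext fun i => by
        change x.1 i + ((a i + b i : ℤ) : ℝ) = x.1 i + (b i : ℝ) + (a i : ℝ)
        push_cast
        ring) }
  have hact : ∀ (a : Fin d → ℤ) (x : V), ((a +ᵥ x : V) : Fin d → ℝ) = x.1 + fun i => (a i : ℝ) :=
    fun _ _ => rfl
  have hne : Nonempty V := ⟨⟨v0, hv0⟩⟩
  have hloc : ∀ x : V, {y : V | Adj x.1 y.1}.Finite := fun x =>
    (hlocN x.1).preimage Subtype.val_injective.injOn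
  have hbox : {x : V | x.1 ∈ Set.Icc (0 : Fin d → ℝ) 1}.Finite := by
    refine ((hlocV (Set.Icc 0 1) isCompact_Icc).preimage
      (Subtype.val_injective (p := fun x => x ∈ V)).injOn).subset fun x hx => ?_
    exact ⟨x.2, hx⟩
  have hconnV : ∀ u v : V, Relation.ReflTransGen (fun x y : V => Adj x.1 y.1) u v := by
    rintro ⟨u, hu⟩ ⟨v, hv⟩
    have h := hconn u hu v hv
    induction h with
    | refl => exact .refl
    | tail _ h ih => exact (ih (hVAdj _ _ h).1).tail h
  obtain ⟨K, hK, w, hw1, hw2, hw3, hw4⟩ := ZD.periodic_labelling hd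
    (X := V) (Adj := fun x y => Adj x.1 y.1) (fun u v h => hsymm _ _ h) (fun u => hirr _) hconnV
    (fun a x h => by
      funext i
      have h1 := congrFun (congrArg Subtype.val h) i
      rw [hact] at h1
      simpa using h1)
    (fun a x y h => by
      rw [hact, hact]
      exact ((hper a).2 _ _).1 h)
    hloc hbox.toFinset (fun x => by
      refine ⟨fun i => ⌊x.1 i⌋, (fun i => -⌊x.1 i⌋ : Fin d → ℤ) +ᵥ x, ?_, ?_⟩
      · rw [Set.Finite.mem_toFinset]
        refine ⟨fun i => ?_, fun i => ?_⟩ <;> rw [hact] <;>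
          simp only [Pi.add_apply, Pi.zero_apply, Pi.one_apply] <;> push_cast
        · linarith [Int.floor_le (x.1 i)]
        · linarith [Int.lt_floor_add_one (x.1 i)]
      · refine Subtype.ext (funext fun i => ?_)
        rw [hact, hact]
        simp)
  let w' : (Fin d → ℝ) → (Fin d → ℝ) → ℕ := fun u v =>
    if h : u ∈ V ∧ v ∈ V then (w ⟨u, h.1⟩ ⟨v, h.2⟩).toNat else 1
  have hw' : ∀ u v : V, w' u.1 v.1 = (w u v).toNat := fun u v => dif_pos ⟨u.2, v.2⟩
  have hdeg : ∀ u : V, ((wdeg Adj w' u.1 : ℕ) : ℤ) = ∑ x ∈ (hloc u).toFinset, w u x := by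
    intro u
    have himg : {v | Adj u.1 v} =
        ((hloc u).toFinset.map (Function.Embedding.subtype _) : Set _) := by
      ext v
      simp only [Set.mem_ofPred_eq, Finset.coe_map, Set.Finite.coe_toFinset, Set.mem_image,
        Function.Embedding.subtype_apply]
      exact ⟨fun h => ⟨⟨v, (hVAdj _ _ h).2⟩, h, rfl⟩, by rintro ⟨y, hy, rfl⟩; exact hy⟩
    rw [wdeg, himg, finsum_mem_coe_finset, Finset.sum_map]
    push_cast
    refine Finset.sum_congr rfl fun x hx => ?_
    rw [Function.Embedding.subtype_apply, hw', Int.toNat_of_nonneg]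
    have := (hw1 u x ((hloc u).mem_toFinset.1 hx)).1
    omega
  refine ⟨K, hK, w', ?_, ?_, ?_, ?_⟩
  · intro u v h
    obtain ⟨hu, hv⟩ := hVAdj u v h
    have h1 := hw1 ⟨u, hu⟩ ⟨v, hv⟩ h
    have h2 := hw' ⟨u, hu⟩ ⟨v, hv⟩
    simp only at h2
    rw [h2]
    simp only [Set.mem_insert_iff, Set.mem_singleton_iff]
    omega
  · intro u v h
    obtain ⟨hu, hv⟩ := hVAdj u v h
    have h1 := hw' ⟨u, hu⟩ ⟨v, hv⟩
    have h2 := hw' ⟨v, hv⟩ ⟨u, hu⟩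
    simp only at h1 h2
    rw [h1, h2, hw2]
  · intro u v h he
    obtain ⟨hu, hv⟩ := hVAdj u v h
    have h1 := hdeg ⟨u, hu⟩
    have h2 := hdeg ⟨v, hv⟩
    simp only at h1 h2
    refine hw3 ⟨u, hu⟩ ⟨v, hv⟩ h ?_
    rw [← h1, ← h2, he]
  · intro t u v h
    obtain ⟨hu, hv⟩ := hVAdj u v h
    have key : ∀ x : V, (x.1 + fun i => ((2 * K * t i : ℤ) : ℝ)) =
        (((K : ℤ) • ((2 : ℤ) • t)) +ᵥ x : V).1 := by
      intro x
      rw [hact]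
      congr 1
      funext i
      simp only [Pi.smul_apply, smul_eq_mul]
      push_cast
      ring
    rw [key ⟨u, hu⟩, key ⟨v, hv⟩, hw', hw4]
    exact (hw' ⟨u, hu⟩ ⟨v, hv⟩).symm
end

section
/- Let d ≥ 1 and let G be a connected, simple graph in ℝ^d which is locally finite and such that every vector of ℤ^d is a period of G. Let N be a positive integer such that for every edge {u,v} of G with u ∈ [0,1)^d, both u and v lie in (−N,N)^d. Consider the quotient of the vertex set V by the translation action of the subgroup (2N)ℤ^d (orbits [u] = u + (2N)ℤ^d), with [u] declared adjacent to [v] if and only if some u₀ ∈ [u] is adjacent in G to some v₀ ∈ [v]. Then this factor graph is a finite, connected, simple graph (in particular, [u] is never adjacent to itself), and for every vertex u of G the quotient map restricts to a bijection from the set of neighbours of u in G onto the set of neighbours of [u] in the factor graph. -/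
/-!
Write `L = (2N)ℤ^d`. The key estimate is that an edge is short: translating an edge `{u, v}` by
`-⌊u⌋` puts its first endpoint into `[0,1)^d`, so `v - ⌊u⌋ ∈ (-N,N)^d` by the choice of `N`
(`edge_bound`). Hence two neighbours of the same vertex differ by less than `2N` in each
coordinate, and so do the two endpoints of an edge, since `v - u ∈ (-N-1, N)^d` and `N + 1 ≤ 2N`.
A vector of `L` with all coordinates of absolute value less than `2N` is zero
(`eq_of_mem_orbit`), so distinct neighbours lie in distinct orbits and no orbit is adjacent to
itself.

Finiteness holds because every orbit meets the compact cube `[0,2N]^d`. Connectedness is inherited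
by mapping walks, and surjectivity on neighbourhoods follows by translating an edge between
`[u]` and `[v]` so that its first endpoint becomes `u`.
-/

/-- The orbit of a point `u ∈ ℝ^d` under translation by the subgroup `(2N)ℤ^d`. -/
def Orbit (d N : ℕ) (u : Fin d → ℝ) : Set (Fin d → ℝ) :=
  {v | ∃ t : Fin d → ℤ, v = u + fun i => ((2 * N * t i : ℤ) : ℝ)}

/-- Adjacency in the factor graph: two `(2N)ℤ^d`-orbits of vertices are adjacent iff some
member of the first is adjacent (in `G`) to some member of the second. -/
def AdjQ {d : ℕ} (V : Set (Fin d → ℝ)) (Adj : (Fin d → ℝ) → (Fin d → ℝ) → Prop)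
    (N : ℕ) (A B : Set (Fin d → ℝ)) : Prop :=
  A ∈ Orbit d N '' V ∧ B ∈ Orbit d N '' V ∧ ∃ a ∈ A, ∃ b ∈ B, Adj a b

theorem self_mem_orbit (d N : ℕ) (u : Fin d → ℝ) : u ∈ Orbit d N u :=
  ⟨0, by ext i; simp⟩

theorem orbit_eq_of_mem {d N : ℕ} {u v : Fin d → ℝ} (h : v ∈ Orbit d N u) :
    Orbit d N v = Orbit d N u := by
  obtain ⟨t, rfl⟩ := h
  ext w
  constructor
  · rintro ⟨s, rfl⟩
    exact ⟨t + s, by ext i; simp; ring⟩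
  · rintro ⟨s, rfl⟩
    exact ⟨s - t, by ext i; simp; ring⟩

/-- Two points of the same orbit that are less than `2N` apart in every coordinate coincide. -/
theorem eq_of_mem_orbit {d N : ℕ} {u v : Fin d → ℝ} (h : v ∈ Orbit d N u)
    (hlt : ∀ i, -(2 * N : ℝ) < v i - u i ∧ v i - u i < 2 * N) : v = u := by
  obtain ⟨t, rfl⟩ := h
  ext i
  obtain ⟨h1, h2⟩ := hlt i
  simp only [Pi.add_apply, add_sub_cancel_left] at h1 h2
  have h1' : -(2 * N : ℤ) < 2 * N * t i := by exact_mod_cast h1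
  have h2' : 2 * N * t i < (2 * N : ℤ) := by exact_mod_cast h2
  have h3 : t i < 1 := by
    by_contra! hc
    nlinarith
  have h4 : -1 < t i := by
    by_contra! hc
    nlinarith
  have h5 : t i = 0 := by omega
  simp [h5]

/-- Every orbit meets the cube `[0,2N]^d`. -/
theorem exists_mem_orbit_Icc {d N : ℕ} (hN : 0 < N) (u : Fin d → ℝ) :
    ∃ v ∈ Orbit d N u, v ∈ Set.Icc (0 : Fin d → ℝ) (fun _ => 2 * (N : ℝ)) := by
  have hpos : (0 : ℝ) < 2 * N := by positivity
  refine ⟨_, ⟨fun i => -⌊u i / (2 * N)⌋, rfl⟩, fun i => ?_, fun i => ?_⟩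
  · have h := (le_div_iff₀ hpos).1 (Int.floor_le (u i / (2 * N)))
    simp only [Pi.zero_apply, Pi.add_apply]
    push_cast
    linarith
  · have h := (div_lt_iff₀ hpos).1 (Int.lt_floor_add_one (u i / (2 * N)))
    simp only [Pi.add_apply]
    push_cast
    linarith

/-- The second endpoint of an edge lies in the cube `(-N,N)^d` centred at the coordinatewise
floor of the first. -/
theorem edge_bound {d N : ℕ} {Adj : (Fin d → ℝ) → (Fin d → ℝ) → Prop}
    (hper : ∀ t : Fin d → ℤ,
      ∀ u v, Adj u v ↔ Adj (u + fun i => (t i : ℝ)) (v + fun i => (t i : ℝ)))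
    (hNbig : ∀ u v, Adj u v → (∀ i, 0 ≤ u i ∧ u i < 1) → ∀ i, -(N : ℝ) < v i ∧ v i < N)
    {u v : Fin d → ℝ} (h : Adj u v) (i : Fin d) :
    -(N : ℝ) < v i - ⌊u i⌋ ∧ v i - ⌊u i⌋ < N := by
  have := hNbig _ _ ((hper (fun i => -⌊u i⌋) u v).1 h) (fun j => ?_) i
  · simpa [← sub_eq_add_neg] using this
  · have h1 := Int.floor_le (u j)
    have h2 := Int.lt_floor_add_one (u j)
    simp only [Pi.add_apply]
    push_cast
    constructor <;> linarith

/-- The factor graph of a connected, locally finite, `ℤ^d`-periodic simple graph in `ℝ^d`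
by the subgroup `(2N)ℤ^d` (for suitable `N`) is a finite, connected, simple graph, and the
quotient map is bijective on neighbourhoods. -/
theorem factor_graph_properties
    (d : ℕ) (hd : 1 ≤ d)
    (V : Set (Fin d → ℝ)) (Adj : (Fin d → ℝ) → (Fin d → ℝ) → Prop)
    (hVAdj : ∀ u v, Adj u v → u ∈ V ∧ v ∈ V)
    (hsymm : ∀ u v, Adj u v → Adj v u)
    (hirr : ∀ u, ¬ Adj u u)
    (hconn : ∀ u ∈ V, ∀ v ∈ V, Relation.ReflTransGen Adj u v)
    (hlocV : ∀ K : Set (Fin d → ℝ), IsCompact K → (V ∩ K).Finite)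
    (hlocN : ∀ u : Fin d → ℝ, {v | Adj u v}.Finite)
    (hper : ∀ t : Fin d → ℤ,
      ((fun v => v + fun i => (t i : ℝ)) '' V = V) ∧
      (∀ u v, Adj u v ↔ Adj (u + fun i => (t i : ℝ)) (v + fun i => (t i : ℝ))))
    (N : ℕ) (hN : 0 < N)
    (hNbig : ∀ u v, Adj u v → (∀ i, 0 ≤ u i ∧ u i < 1) →
      ((∀ i, -(N : ℝ) < u i ∧ u i < N) ∧ (∀ i, -(N : ℝ) < v i ∧ v i < N))) :
    (Orbit d N '' V).Finite ∧
    (∀ A B, AdjQ V Adj N A B → AdjQ V Adj N B A) ∧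
    (∀ A, ¬ AdjQ V Adj N A A) ∧
    (∀ u ∈ V, ∀ v ∈ V,
      Relation.ReflTransGen (AdjQ V Adj N) (Orbit d N u) (Orbit d N v)) ∧
    (∀ u ∈ V, Set.BijOn (Orbit d N) {v | Adj u v} {B | AdjQ V Adj N (Orbit d N u) B}) := by
  have hbound : ∀ {u v : Fin d → ℝ}, Adj u v → ∀ i, -(N : ℝ) < v i - ⌊u i⌋ ∧ v i - ⌊u i⌋ < N :=
    fun h => edge_bound (fun t => (hper t).2) (fun u v h hu => (hNbig u v h hu).2) h
  have hmap : ∀ u v, Adj u v → AdjQ V Adj N (Orbit d N u) (Orbit d N v) := fun u v h =>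
    ⟨⟨u, (hVAdj u v h).1, rfl⟩, ⟨v, (hVAdj u v h).2, rfl⟩,
      u, self_mem_orbit d N u, v, self_mem_orbit d N v, h⟩
  refine ⟨?_, ?_, ?_, ?_, ?_⟩
  · refine ((hlocV (Set.Icc 0 (fun _ => 2 * (N : ℝ))) isCompact_Icc).image (Orbit d N)).subset ?_
    rintro _ ⟨u, hu, rfl⟩
    obtain ⟨v, hv, hvK⟩ := exists_mem_orbit_Icc hN u
    refine ⟨v, ⟨?_, hvK⟩, orbit_eq_of_mem hv⟩
    obtain ⟨t, rfl⟩ := hv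
    rw [← (hper fun i => 2 * N * t i).1]
    exact ⟨u, hu, rfl⟩
  · rintro A B ⟨hA, hB, a, ha, b, hb, hab⟩
    exact ⟨hB, hA, b, hb, a, ha, hsymm a b hab⟩
  · rintro _ ⟨⟨w, -, rfl⟩, -, a, ha, b, hb, hab⟩
    rw [← orbit_eq_of_mem ha] at hb
    refine hirr a ?_
    have hba : b = a := by
      refine eq_of_mem_orbit hb fun i => ?_
      have h1 := hbound hab i
      have h2 := Int.floor_le (a i)
      have h3 := Int.lt_floor_add_one (a i)
      -- `b i - a i` lies in `(-N-1, N)`, and `N + 1 ≤ 2N`.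
      have hN1 : (1 : ℝ) ≤ N := by exact_mod_cast hN
      constructor <;> linarith
    rwa [hba] at hab
  · intro u hu v hv
    exact (hconn u hu v hv).lift (Orbit d N) hmap
  · intro u hu
    refine ⟨fun v hv => hmap u v hv, ?_, ?_⟩
    · intro v hv w hw hvw
      have hmem : v ∈ Orbit d N w := hvw ▸ self_mem_orbit d N v
      refine eq_of_mem_orbit hmem fun i => ?_
      have h1 := hbound hv i
      have h2 := hbound hw i
      constructor <;> linarith
    · rintro _ ⟨-, ⟨w, -, rfl⟩, a, ⟨t, rfl⟩, b, hb, hab⟩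
      -- Translating the edge by `-2N t` moves its first endpoint to `u`.
      have hmem : (b + fun i => ((2 * N * (-t) i : ℤ) : ℝ)) ∈ Orbit d N b := ⟨-t, rfl⟩
      refine ⟨_, ?_, (orbit_eq_of_mem hmem).trans (orbit_eq_of_mem hb)⟩
      have h := ((hper fun i => 2 * N * (-t) i).2 _ _).1 hab
      rw [Set.mem_ofPred_eq]
      convert h using 1
      ext i
      simp
end
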